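/- arXiv:1907.10184 — 2 statements merged into one kernel-verified Lean document; each statement's English description precedes it below -/
import Mathlib

section
/- Let S ⊆ {−1,0,1}^d be a nontrivial reflectable stepset and α ∈ (ℝ_{>0})^d with α_1 ≤ ⋯ ≤ α_m < 1 = α_{m+1} = ⋯ = α_r < α_{r+1} ≤ ⋯ ≤ α_d. Define, for θ ∈ ℝ^r: A(θ) := ∏_{k=1}^m (1 − e^{2iθ_k})/(1 − α_k e^{iθ_k}) · ∏_{k=m+1}^r (1 + e^{iθ_k}); f(θ) := Σ_{σ∈S} (∏_{k≤r} e^{−iθ_k σ_k})(∏_{k>r} α_k^{σ_k}); φ(θ) := log S(α⁺) − log f(θ) (principal logarithm, on a neighbourhood of 0 where f is close to the positive real f(0) = S(α⁺)); P_k := Σ_{σ∈S, σ_k=1} ∏_{j≠k} (α_j⁺)^{σ_j} for 1 ≤ k ≤ r; the operator D g := Σ_{k=1}^r (S(α⁺)/(2P_k)) ∂²g/∂θ_k² (which is Σ (H^{−1})_{u,v}∂_u∂_v for the Hessian H of φ at 0); and φ̄ := φ minus its degree-two Taylor polynomial at 0. Then: (i) for every integer j with 0 ≤ j < m and every ℓ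 with 0 ≤ ℓ ≤ 2j, D^{ℓ+j}(A·φ̄^ℓ)(0) = 0; (ii) for every ℓ ≥ 1, D^{ℓ+m}(A·φ̄^ℓ)(0) = 0; and (iii) D^m A(0) ≠ 0. Consequently, in the Fourier–Laplace expansion the first nonzero coefficient C_j occurs at j = m, and only the ℓ = 0 term contributes to C_m. -/
open scoped BigOperators Classical

def IsStepset (d : ℕ) (S : Finset (Fin d → ℤ)) : Prop :=
  ∀ σ ∈ S, ∀ j, σ j = -1 ∨ σ j = 0 ∨ σ j = 1

def Reflectable (d : ℕ) (S : Finset (Fin d → ℤ)) : Prop :=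
  ∀ σ ∈ S, ∀ j, Function.update σ j (-(σ j)) ∈ S

def NontrivialStepset (d : ℕ) (S : Finset (Fin d → ℤ)) : Prop :=
  ∀ j, ∃ σ ∈ S, σ j ≠ 0

noncomputable def inventory (d : ℕ) (S : Finset (Fin d → ℤ)) (x : Fin d → ℝ) : ℝ :=
  ∑ σ ∈ S, ∏ j, x j ^ (σ j)

/-- Partial derivative in direction `k` of a function on `ℝ^r`. -/
noncomputable def pd {r : ℕ} (k : Fin r) (g : (Fin r → ℝ) → ℂ) : (Fin r → ℝ) → ℂ :=
  fun θ => deriv (fun s => g (Function.update θ k s)) (θ k)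

/-!
The operator `D` is diagonal of even order in each variable, so it preserves parity in each `θₖ`, and
`D^n g` vanishes at the origin whenever `g` is odd in some variable (`HasParity.diagOp_iterate`).
Reflectability makes `f`, hence the phase and `φ̄`, even in every variable. Writing each factor of `A`
as even part plus odd part and expanding, every term of `A φ̄^ℓ` but the product of the even parts is
odd in some variable and is killed by `D^n` at the origin (`diagOp_iterate_symmetrize`).

The rest is a count of orders of vanishing. The even part of `(1 - e^{2it}) / (1 - a e^{it})` is
`2 sin² t / |1 - a e^{it}|²`, which is `2 t² / (1 - a)²` to leading order, and the even part of
`1 + e^{it}` is `2` to leading order, so the even part of `A` vanishes to order `2m`. An even function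
has no cubic or mixed quadratic terms, so `φ̄` vanishes to order four
(`vanishOrder_four_of_even`, `vanishOrder_phaseRemainder`); the required pure second derivatives come
from restricting `f` to the coordinate axes, where it is `S(α⁺) - 2 Pₖ (1 - cos t)`. Thus the even part
of `A φ̄^ℓ` vanishes to order `2m + 4ℓ`, while `D^(ℓ+j)` differentiates only `2ℓ + 2j` times: this is too
few when `j < m`, and also when `j = m` and `ℓ ≥ 1`. For `j = m` and `ℓ = 0`, `D^m` acts on the leading
term, a nonzero multiple of `∏_{k < m} θₖ²`, and gives a nonzero multiple of `m! ∏ 2cₖ`, where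
`cₖ = S(α⁺) / (2 Pₖ)` is nonzero because nontriviality and reflectability give `Pₖ > 0`
(`diagOp_iterate_prod_sq`, `amplitude_coefficients`).
-/

section Helpers

open Filter Topology Function
open scoped ContDiff

/-- Smoothness at the origin. -/
abbrev SmoothAtZero {r : ℕ} (g : (Fin r → ℝ) → ℂ) : Prop := ContDiffAt ℝ ∞ g 0

/-! ### Partial derivatives of germs at the origin -/

theorem pd_eq_fderiv {r : ℕ} (k : Fin r) {g : (Fin r → ℝ) → ℂ} {θ : Fin r → ℝ}
    (hg : DifferentiableAt ℝ g θ) : pd k g θ = fderiv ℝ g θ (Pi.single k 1) := by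
  have h1 : HasDerivAt (fun s => update θ k s) (Pi.single k (1 : ℝ)) (θ k) :=
    hasDerivAt_update θ k (θ k)
  have hg' : HasFDerivAt g (fderiv ℝ g θ) (update θ k (θ k)) := by
    rw [update_eq_self]; exact hg.hasFDerivAt
  exact (hg'.comp_hasDerivAt (θ k) h1).deriv

theorem SmoothAtZero.eventually_diff {r : ℕ} {g : (Fin r → ℝ) → ℂ} (hg : SmoothAtZero g) :
    ∀ᶠ θ in 𝓝 (0 : Fin r → ℝ), DifferentiableAt ℝ g θ := by
  have h1 : ContDiffAt ℝ 1 g 0 := hg.of_le (by exact_mod_cast le_top)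
  filter_upwards [h1.eventually (by simp)] with θ hθ
  exact hθ.differentiableAt (by simp)

theorem pd_congr {r : ℕ} (k : Fin r) {g h : (Fin r → ℝ) → ℂ} (hgh : g =ᶠ[𝓝 0] h) :
    pd k g =ᶠ[𝓝 0] pd k h := by
  filter_upwards [eventually_eventually_nhds.2 hgh] with θ hθ
  apply Filter.EventuallyEq.deriv_eq
  have hc : ContinuousAt (fun s => update θ k s) (θ k) :=
    (hasDerivAt_update θ k (θ k)).continuousAt
  have : Tendsto (fun s => update θ k s) (𝓝 (θ k)) (𝓝 θ) := by
    simpa [ContinuousAt] using hc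
  exact this.eventually hθ

theorem SmoothAtZero.pd {r : ℕ} {g : (Fin r → ℝ) → ℂ} (hg : SmoothAtZero g) (k : Fin r) :
    SmoothAtZero (pd k g) := by
  have h1 : ContDiffAt ℝ ∞ (fun θ => fderiv ℝ g θ (Pi.single k 1)) 0 :=
    (hg.fderiv_right (m := ∞) (by simp)).clm_apply contDiffAt_const
  refine h1.congr_of_eventuallyEq ?_
  filter_upwards [hg.eventually_diff] with θ hθ
  exact pd_eq_fderiv k hθ

theorem pd_add {r : ℕ} (k : Fin r) {g h : (Fin r → ℝ) → ℂ} (hg : SmoothAtZero g)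
    (hh : SmoothAtZero h) :
    pd k (fun θ => g θ + h θ) =ᶠ[𝓝 0] fun θ => pd k g θ + pd k h θ := by
  filter_upwards [hg.eventually_diff, hh.eventually_diff] with θ h1 h2
  rw [pd_eq_fderiv k h1, pd_eq_fderiv k h2, pd_eq_fderiv k (h1.fun_add h2), fderiv_fun_add h1 h2]
  rfl

theorem pd_mul {r : ℕ} (k : Fin r) {g h : (Fin r → ℝ) → ℂ} (hg : SmoothAtZero g)
    (hh : SmoothAtZero h) :
    pd k (fun θ => g θ * h θ) =ᶠ[𝓝 0] fun θ => pd k g θ * h θ + g θ * pd k h θ := by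
  filter_upwards [hg.eventually_diff, hh.eventually_diff] with θ h1 h2
  rw [pd_eq_fderiv k h1, pd_eq_fderiv k h2, pd_eq_fderiv k (h1.fun_mul h2), fderiv_fun_mul h1 h2]
  simp [mul_comm, add_comm]

theorem pd_sum {r : ℕ} (k : Fin r) {ι : Type*} (s : Finset ι) {g : ι → (Fin r → ℝ) → ℂ}
    (hg : ∀ i ∈ s, SmoothAtZero (g i)) :
    pd k (fun θ => ∑ i ∈ s, g i θ) =ᶠ[𝓝 0] fun θ => ∑ i ∈ s, pd k (g i) θ := by
  have h : ∀ᶠ θ in 𝓝 (0 : Fin r → ℝ), ∀ i ∈ s, DifferentiableAt ℝ (g i) θ :=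
    (Finset.eventually_all s).2 fun i hi => (hg i hi).eventually_diff
  filter_upwards [h] with θ hθ
  rw [pd_eq_fderiv k (DifferentiableAt.fun_sum hθ), fderiv_fun_sum hθ]
  simp only [_root_.sum_apply]
  exact Finset.sum_congr rfl fun i hi => (pd_eq_fderiv k (hθ i hi)).symm

theorem pd_const_mul {r : ℕ} (k : Fin r) (c : ℂ) (g : (Fin r → ℝ) → ℂ) :
    pd k (fun θ => c * g θ) = fun θ => c * pd k g θ := by
  funext θ
  exact deriv_const_mul_field c

/-! ### Order of vanishing -/

/-- `VanishOrder n g`: `g` is smooth at the origin and vanishes there to order at least `n`, i.e.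
all its iterated partial derivatives of order `< n` are zero at the origin. -/
def VanishOrder {r : ℕ} : ℕ → ((Fin r → ℝ) → ℂ) → Prop
  | 0, g => SmoothAtZero g
  | n + 1, g => SmoothAtZero g ∧ g 0 = 0 ∧ ∀ k, VanishOrder n (pd k g)

theorem VanishOrder.smooth {r n : ℕ} {g : (Fin r → ℝ) → ℂ} (h : VanishOrder n g) :
    SmoothAtZero g := by
  cases n with
  | zero => exact h
  | succ n => exact h.1

theorem VanishOrder.congr {r n : ℕ} {g h : (Fin r → ℝ) → ℂ} (hg : VanishOrder n g)
    (hgh : g =ᶠ[𝓝 0] h) : VanishOrder n h := by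
  induction n generalizing g h with
  | zero => exact ContDiffAt.congr_of_eventuallyEq hg hgh.symm
  | succ n ih =>
    exact ⟨hg.1.congr_of_eventuallyEq hgh.symm, hgh.eq_of_nhds ▸ hg.2.1,
      fun k => ih (hg.2.2 k) (pd_congr k hgh)⟩

theorem VanishOrder.pred {r n : ℕ} {g : (Fin r → ℝ) → ℂ} (h : VanishOrder (n + 1) g) :
    VanishOrder n g := by
  induction n generalizing g with
  | zero => exact h.1
  | succ n ih => exact ⟨h.1, h.2.1, fun k => ih (h.2.2 k)⟩

theorem VanishOrder.mono {r n n' : ℕ} {g : (Fin r → ℝ) → ℂ} (h : VanishOrder n' g)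
    (hn : n ≤ n') : VanishOrder n g := by
  induction n', hn using Nat.le_induction with
  | base => exact h
  | succ k _ ih => exact ih h.pred

theorem VanishOrder.add {r n : ℕ} {g h : (Fin r → ℝ) → ℂ} (hg : VanishOrder n g)
    (hh : VanishOrder n h) : VanishOrder n (fun θ => g θ + h θ) := by
  induction n generalizing g h with
  | zero => exact ContDiffAt.add hg hh
  | succ n ih =>
    exact ⟨hg.1.add hh.1, by simp [hg.2.1, hh.2.1],
      fun k => (ih (hg.2.2 k) (hh.2.2 k)).congr (pd_add k hg.1 hh.1).symm⟩

/-- By the Leibniz rule, orders of vanishing add under multiplication. -/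
theorem VanishOrder.mul {r a b : ℕ} {g h : (Fin r → ℝ) → ℂ} (hg : VanishOrder a g)
    (hh : VanishOrder b h) : VanishOrder (a + b) (fun θ => g θ * h θ) := by
  obtain ⟨n, hn⟩ : ∃ n, n = a + b := ⟨_, rfl⟩
  induction n generalizing a b g h with
  | zero =>
    rw [← hn]
    exact ContDiffAt.mul hg.smooth hh.smooth
  | succ n ih =>
    rw [← hn]
    refine ⟨hg.smooth.mul hh.smooth, ?_, fun k => ?_⟩
    · rcases a with _ | a
      · rcases b with _ | b
        · omega
        · simp [hh.2.1]
      · simp [hg.2.1]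
    · refine VanishOrder.congr ?_ (pd_mul k hg.smooth hh.smooth).symm
      refine VanishOrder.add ?_ ?_
      · rcases a with _ | a
        · rcases b with _ | b
          · omega
          · have := ih (a := 0) (b := b) (hg.smooth.pd k) hh.pred (by omega)
            exact this.mono (by omega)
        · exact (ih (hg.2.2 k) hh (by omega)).mono (by omega)
      · rcases b with _ | b
        · rcases a with _ | a
          · omega
          · have := ih (a := a) (b := 0) hg.pred (hh.smooth.pd k) (by omega)
            exact this.mono (by omega)
        · exact (ih hg (hh.2.2 k) (by omega)).mono (by omega)

theorem smooth_const {r : ℕ} (c : ℂ) : SmoothAtZero (fun _ : Fin r → ℝ => c) := contDiffAt_const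

theorem VanishOrder.const_mul {r n : ℕ} {g : (Fin r → ℝ) → ℂ} (c : ℂ) (hg : VanishOrder n g) :
    VanishOrder n (fun θ => c * g θ) := by
  have := VanishOrder.mul (a := 0) (smooth_const c) hg
  rwa [zero_add] at this

theorem VanishOrder.pow {r n : ℕ} {g : (Fin r → ℝ) → ℂ} (hg : VanishOrder n g) (l : ℕ) :
    VanishOrder (n * l) (fun θ => g θ ^ l) := by
  induction l with
  | zero =>
    simp only [pow_zero, mul_zero]
    exact smooth_const 1
  | succ l ih =>
    rw [mul_add_one]
    simpa only [pow_succ] using ih.mul hg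

theorem vanishOrder_one {r : ℕ} {g : (Fin r → ℝ) → ℂ} (hg : SmoothAtZero g) (h0 : g 0 = 0) :
    VanishOrder 1 g := ⟨hg, h0, fun k => hg.pd k⟩

/-- `LeadingTerm n g L`: `L` vanishes to order `n` at the origin and agrees with `g` up to terms of
order `n + 1`. -/
def LeadingTerm {r : ℕ} (n : ℕ) (g L : (Fin r → ℝ) → ℂ) : Prop :=
  VanishOrder n L ∧ VanishOrder (n + 1) (fun θ => g θ - L θ)

theorem LeadingTerm.vanish {r n : ℕ} {g L : (Fin r → ℝ) → ℂ} (h : LeadingTerm n g L) :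
    VanishOrder n g := by
  simpa using h.1.add h.2.pred

theorem LeadingTerm.mul {r a b : ℕ} {g h L M : (Fin r → ℝ) → ℂ} (hg : LeadingTerm a g L)
    (hh : LeadingTerm b h M) :
    LeadingTerm (a + b) (fun θ => g θ * h θ) (fun θ => L θ * M θ) := by
  refine ⟨hg.1.mul hh.1, ?_⟩
  have h1 := (hg.2.mul hh.vanish).mono (show a + b + 1 ≤ a + 1 + b by omega)
  have h2 := hg.1.mul hh.2
  refine (h1.add h2).congr (Eventually.of_forall fun θ => ?_)
  ring

theorem leadingTerm_prod {r : ℕ} {ι : Type*} (s : Finset ι) (e : ι → ℕ)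
    {g L : ι → (Fin r → ℝ) → ℂ} (h : ∀ i ∈ s, LeadingTerm (e i) (g i) (L i)) :
    LeadingTerm (∑ i ∈ s, e i) (fun θ => ∏ i ∈ s, g i θ) (fun θ => ∏ i ∈ s, L i θ) := by
  induction s using Finset.induction_on with
  | empty =>
    simp only [Finset.sum_empty, Finset.prod_empty]
    exact ⟨smooth_const 1, by simpa using vanishOrder_one (smooth_const (r := r) 0) rfl⟩
  | insert i s hi ih =>
    simp only [Finset.sum_insert hi, Finset.prod_insert hi]
    exact (h i (by simp)).mul (ih fun j hj => h j (by simp [hj]))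

/-! ### The second-order operator -/

/-- The constant-coefficient diagonal second-order operator `∑ₖ cₖ ∂²/∂θₖ²`. -/
noncomputable def diagOp {r : ℕ} (c : Fin r → ℂ) (g : (Fin r → ℝ) → ℂ) : (Fin r → ℝ) → ℂ :=
  fun θ => ∑ k, c k * pd k (pd k g) θ

theorem diagOp_congr {r : ℕ} (c : Fin r → ℂ) {g h : (Fin r → ℝ) → ℂ} (hgh : g =ᶠ[𝓝 0] h) :
    diagOp c g =ᶠ[𝓝 0] diagOp c h := by
  have : ∀ᶠ θ in 𝓝 (0 : Fin r → ℝ), ∀ k, pd k (pd k g) θ = pd k (pd k h) θ :=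
    eventually_all.2 fun k => pd_congr k (pd_congr k hgh)
  filter_upwards [this] with θ hθ
  simp [diagOp, hθ]

theorem diagOp_iterate_congr {r : ℕ} (c : Fin r → ℂ) (n : ℕ) {g h : (Fin r → ℝ) → ℂ}
    (hgh : g =ᶠ[𝓝 0] h) : (diagOp c)^[n] g =ᶠ[𝓝 0] (diagOp c)^[n] h := by
  induction n generalizing g h with
  | zero => exact hgh
  | succ n ih => exact ih (diagOp_congr c hgh)

theorem VanishOrder.sum {r n : ℕ} {ι : Type*} (s : Finset ι) {g : ι → (Fin r → ℝ) → ℂ}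
    (h : ∀ i ∈ s, VanishOrder n (g i)) : VanishOrder n (fun θ => ∑ i ∈ s, g i θ) := by
  induction s using Finset.induction_on with
  | empty =>
    have := VanishOrder.mul (a := n) (b := 0) (g := fun _ : Fin r → ℝ => 0) ?_ (smooth_const 1)
    · simpa using this
    · clear h
      induction n with
      | zero => exact smooth_const 0
      | succ n ih =>
        refine ⟨smooth_const 0, rfl, fun k => ?_⟩
        have : pd k (fun _ : Fin r → ℝ => (0 : ℂ)) = fun _ => 0 := by
          funext θ; simp [_root_.pd]
        rwa [this]
  | insert i s hi ih =>
    simp only [Finset.sum_insert hi]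
    exact (h i (by simp)).add (ih fun j hj => h j (by simp [hj]))

theorem VanishOrder.diagOp {r n : ℕ} (c : Fin r → ℂ) {g : (Fin r → ℝ) → ℂ}
    (h : VanishOrder (n + 2) g) : VanishOrder n (diagOp c g) :=
  VanishOrder.sum _ fun k _ => ((h.2.2 k).2.2 k).const_mul (c k)

theorem SmoothAtZero.diagOp {r : ℕ} (c : Fin r → ℂ) {g : (Fin r → ℝ) → ℂ}
    (h : SmoothAtZero g) : SmoothAtZero (diagOp c g) :=
  VanishOrder.sum (n := 0) _ fun k _ => VanishOrder.const_mul (n := 0) (c k) ((h.pd k).pd k)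

/-- `n` applications of a second-order operator lower the order of vanishing by at most `2n`. -/
theorem VanishOrder.diagOp_iterate {r n : ℕ} (c : Fin r → ℂ) {g : (Fin r → ℝ) → ℂ}
    (h : VanishOrder (2 * n + 1) g) : (_root_.diagOp c)^[n] g 0 = 0 := by
  induction n generalizing g with
  | zero => exact h.2.1
  | succ n ih => exact ih (VanishOrder.diagOp c h)

theorem diagOp_sum {r : ℕ} (c : Fin r → ℂ) {ι : Type*} (s : Finset ι)
    {g : ι → (Fin r → ℝ) → ℂ} (hg : ∀ i ∈ s, SmoothAtZero (g i)) :
    diagOp c (fun θ => ∑ i ∈ s, g i θ) =ᶠ[𝓝 0] fun θ => ∑ i ∈ s, diagOp c (g i) θ := by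
  have : ∀ᶠ θ in 𝓝 (0 : Fin r → ℝ), ∀ k,
      pd k (pd k (fun θ => ∑ i ∈ s, g i θ)) θ = ∑ i ∈ s, pd k (pd k (g i)) θ :=
    eventually_all.2 fun k => (pd_congr k (pd_sum k s hg)).trans
      (pd_sum k s fun i hi => (hg i hi).pd k)
  filter_upwards [this] with θ hθ
  simp only [diagOp, hθ, Finset.mul_sum]
  exact Finset.sum_comm

theorem diagOp_iterate_sum {r : ℕ} (c : Fin r → ℂ) (n : ℕ) {ι : Type*} (s : Finset ι)
    {g : ι → (Fin r → ℝ) → ℂ} (hg : ∀ i ∈ s, SmoothAtZero (g i)) :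
    (diagOp c)^[n] (fun θ => ∑ i ∈ s, g i θ) =ᶠ[𝓝 0]
      fun θ => ∑ i ∈ s, (diagOp c)^[n] (g i) θ := by
  induction n generalizing g with
  | zero => exact EventuallyEq.rfl
  | succ n ih =>
    exact (diagOp_iterate_congr c n (diagOp_sum c s hg)).trans
      (ih fun i hi => (hg i hi).diagOp c)

theorem diagOp_iterate_const_mul {r : ℕ} (c : Fin r → ℂ) (n : ℕ) (a : ℂ)
    (g : (Fin r → ℝ) → ℂ) :
    (diagOp c)^[n] (fun θ => a * g θ) = fun θ => a * (diagOp c)^[n] g θ := by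
  induction n generalizing g with
  | zero => rfl
  | succ n ih =>
    simp only [iterate_succ, comp_apply]
    rw [← ih]
    congr 1
    funext θ
    simp only [diagOp, pd_const_mul, Finset.mul_sum]
    exact Finset.sum_congr rfl fun k _ => by ring

/-- Derivatives of total order `2n` at the origin only see the terms of degree `2n`. -/
theorem diagOp_iterate_leadingTerm {r n : ℕ} (c : Fin r → ℂ) {g L : (Fin r → ℝ) → ℂ}
    (h : LeadingTerm (2 * n) g L) : (diagOp c)^[n] g 0 = (diagOp c)^[n] L 0 := by
  have h1 := (diagOp_iterate_sum c n (Finset.univ : Finset Bool)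
    (g := fun b => if b then L else fun θ => g θ - L θ) (by
      intro b _
      cases b
      · exact h.2.smooth
      · exact h.1.smooth)).eq_of_nhds
  simpa [h.2.diagOp_iterate c] using h1

theorem smooth_coord {r : ℕ} (k : Fin r) : SmoothAtZero (fun θ => (θ k : ℂ)) :=
  (Complex.ofRealCLM.contDiff.comp (contDiff_apply ℝ ℝ k)).contDiffAt

theorem pd_pd_eq {r : ℕ} (k : Fin r) (g : (Fin r → ℝ) → ℂ) (θ : Fin r → ℝ) :
    pd k (pd k g) θ = deriv (deriv fun s => g (update θ k s)) (θ k) := by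
  simp only [pd, update_idem, update_self]

theorem deriv_deriv_sq_mul (C : ℂ) (t : ℝ) :
    deriv (deriv fun s : ℝ => (s : ℂ) ^ 2 * C) t = 2 * C := by
  have h0 : ∀ s : ℝ, HasDerivAt (fun s : ℝ => (s : ℂ)) 1 s := fun s =>
    Complex.ofRealCLM.hasDerivAt
  have h1 : (deriv fun s : ℝ => (s : ℂ) ^ 2 * C) = fun s : ℝ => (s : ℂ) * (2 * C) := by
    funext s
    rw [(((h0 s).fun_pow 2).mul_const C).deriv]
    simp
    ring
  rw [h1, ((h0 t).mul_const (2 * C)).deriv, one_mul]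

theorem diagOp_prod_sq {r : ℕ} (c : Fin r → ℂ) (T : Finset (Fin r)) :
    diagOp c (fun θ => ∏ k ∈ T, (θ k : ℂ) ^ 2) =
      fun θ => ∑ k ∈ T, 2 * c k * ∏ j ∈ T.erase k, (θ j : ℂ) ^ 2 := by
  funext θ
  simp only [diagOp, pd_pd_eq]
  rw [← Finset.sum_subset (Finset.subset_univ T)]
  · refine Finset.sum_congr rfl fun k hk => ?_
    have h1 : (fun s : ℝ => ∏ j ∈ T, ((update θ k s j : ℝ) : ℂ) ^ 2) =
        fun s : ℝ => (s : ℂ) ^ 2 * ∏ j ∈ T.erase k, (θ j : ℂ) ^ 2 := by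
      funext s
      rw [← Finset.mul_prod_erase T _ hk, update_self]
      congr 1
      exact Finset.prod_congr rfl fun j hj => by rw [update_of_ne (Finset.ne_of_mem_erase hj)]
    rw [h1, deriv_deriv_sq_mul]
    ring
  · intro k _ hk
    have h1 : (fun s : ℝ => ∏ j ∈ T, ((update θ k s j : ℝ) : ℂ) ^ 2) =
        fun _ : ℝ => ∏ j ∈ T, (θ j : ℂ) ^ 2 := by
      funext s
      exact Finset.prod_congr rfl fun j hj => by
        rw [update_of_ne (ne_of_mem_of_not_mem hj hk)]
    rw [h1]
    simp

/-- Iterating `n = #T` times on `∏_{k ∈ T} θₖ²` picks each variable of `T` exactly once, in any of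
the `n!` orders. -/
theorem diagOp_iterate_prod_sq {r : ℕ} (c : Fin r → ℂ) (n : ℕ) (T : Finset (Fin r))
    (hT : T.card = n) :
    (diagOp c)^[n] (fun θ => ∏ k ∈ T, (θ k : ℂ) ^ 2) 0 =
      (n.factorial : ℂ) * ∏ k ∈ T, (2 * c k) := by
  induction n generalizing T with
  | zero => simp [Finset.card_eq_zero.1 hT]
  | succ n ih =>
    have hs : ∀ T' : Finset (Fin r), SmoothAtZero fun θ => ∏ k ∈ T', (θ k : ℂ) ^ 2 := fun T' =>
      contDiffAt_prod fun k _ => (smooth_coord k).pow 2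
    rw [iterate_succ_apply, diagOp_prod_sq, (diagOp_iterate_sum c n T fun k _ =>
      contDiffAt_const.mul (hs (T.erase k))).eq_of_nhds]
    have h1 : ∀ k ∈ T, (diagOp c)^[n] (fun θ => 2 * c k * ∏ j ∈ T.erase k, (θ j : ℂ) ^ 2) 0 =
        (n.factorial : ℂ) * ∏ k ∈ T, (2 * c k) := by
      intro k hk
      rw [diagOp_iterate_const_mul]
      beta_reduce
      rw [ih (T.erase k) (by rw [Finset.card_erase_of_mem hk, hT]; rfl),
        ← Finset.mul_prod_erase T _ hk]
      ring
    rw [Finset.sum_congr rfl h1, Finset.sum_const, hT, Nat.factorial_succ]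
    simp
    ring

/-! ### Parity -/

/-- `g` is multiplied by `ε` when the sign of `θₖ` is flipped. -/
def HasParity {r : ℕ} (k : Fin r) (ε : ℂ) (g : (Fin r → ℝ) → ℂ) : Prop :=
  ∀ θ, g (update θ k (-θ k)) = ε * g θ

theorem HasParity.pd_self {r : ℕ} {k : Fin r} {ε : ℂ} {g : (Fin r → ℝ) → ℂ}
    (h : HasParity k ε g) : HasParity k (-ε) (pd k g) := by
  intro θ
  have h1 : (fun s => g (update θ k s)) = fun s => ε * g (update θ k (-s)) := by
    funext s
    have h2 := h (update θ k (-s))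
    simpa using h2
  simp only [pd, update_idem, update_self]
  conv_lhs => rw [h1]
  rw [deriv_const_mul_field,
    deriv_comp_neg (fun s => g (update θ k s)) (-θ k), neg_neg]
  ring

theorem HasParity.pd_of_ne {r : ℕ} {k j : Fin r} (hjk : j ≠ k) {ε : ℂ} {g : (Fin r → ℝ) → ℂ}
    (h : HasParity k ε g) : HasParity k ε (pd j g) := by
  intro θ
  simp only [pd, update_of_ne hjk]
  rw [← deriv_const_mul_field]
  congr 1
  funext s
  rw [← h, update_comm hjk, update_of_ne hjk.symm]

theorem HasParity.diagOp {r : ℕ} {k : Fin r} {ε : ℂ} (c : Fin r → ℂ) {g : (Fin r → ℝ) → ℂ}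
    (h : HasParity k ε g) : HasParity k ε (diagOp c g) := by
  intro θ
  simp only [_root_.diagOp, Finset.mul_sum]
  refine Finset.sum_congr rfl fun j _ => ?_
  have h1 : HasParity k ε (pd j (pd j g)) := by
    by_cases hjk : j = k
    · subst hjk
      simpa using h.pd_self.pd_self
    · exact (h.pd_of_ne hjk).pd_of_ne hjk
  rw [h1]
  ring

theorem HasParity.zero {r : ℕ} {k : Fin r} {g : (Fin r → ℝ) → ℂ} (h : HasParity k (-1) g) :
    g 0 = 0 := by
  have h1 := h 0
  have h2 : update (0 : Fin r → ℝ) k (-(0 : Fin r → ℝ) k) = 0 := by simp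
  rw [h2] at h1
  linear_combination h1 / 2

theorem HasParity.diagOp_iterate {r : ℕ} {k : Fin r} (c : Fin r → ℂ) (n : ℕ)
    {g : (Fin r → ℝ) → ℂ} (h : HasParity k (-1) g) : (_root_.diagOp c)^[n] g 0 = 0 := by
  induction n generalizing g with
  | zero => exact h.zero
  | succ n ih => exact ih (h.diagOp c)

/-- A function even in each variable has no Taylor terms of odd degree and no mixed quadratic
terms, so it vanishes to order four as soon as its value and pure second derivatives do. -/
theorem vanishOrder_four_of_even {r : ℕ} {g : (Fin r → ℝ) → ℂ} (hg : SmoothAtZero g)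
    (heven : ∀ k, HasParity k 1 g) (h0 : g 0 = 0) (h2 : ∀ k, pd k (pd k g) 0 = 0) :
    VanishOrder 4 g := by
  have hodd : ∀ k, HasParity k (-1) (pd k g) := fun k => (heven k).pd_self
  refine ⟨hg, h0, fun i => ⟨hg.pd i, (hodd i).zero, fun j =>
    ⟨(hg.pd i).pd j, ?_, fun l => vanishOrder_one (((hg.pd i).pd j).pd l) ?_⟩⟩⟩
  · by_cases hij : j = i
    · subst hij; exact h2 j
    · exact ((hodd i).pd_of_ne hij).zero
  · by_cases hij : j = i
    · subst hij
      have h3 : ∀ k, HasParity k 1 (pd j (pd j g)) := fun k => by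
        by_cases hjk : j = k
        · subst hjk; simpa using (hodd j).pd_self
        · exact ((heven k).pd_of_ne hjk).pd_of_ne hjk
      exact (h3 l).pd_self.zero
    · by_cases hli : l = i
      · subst hli
        exact (((heven j).pd_of_ne (Ne.symm hij)).pd_self.pd_of_ne (Ne.symm hij)).zero
      · exact (((hodd i).pd_of_ne hij).pd_of_ne hli).zero

theorem smooth_comp_coord {r : ℕ} {h : ℝ → ℂ} (hh : ContDiffAt ℝ ∞ h 0) (k : Fin r) :
    SmoothAtZero (fun θ => h (θ k)) :=
  ContDiffAt.comp (0 : Fin r → ℝ) (f := fun θ : Fin r → ℝ => θ k) hh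
    (contDiff_apply ℝ ℝ k).contDiffAt

theorem HasParity.even_pow {r : ℕ} {k : Fin r} {ψ : (Fin r → ℝ) → ℂ} (h : HasParity k 1 ψ)
    (l : ℕ) : HasParity k 1 (fun θ => ψ θ ^ l) := fun θ => by simp only [h θ, one_mul]

/-- In a product of one-variable factors times an even function, only the even parts of the factors
contribute to iterates of `diagOp c` at the origin: every other term of the expansion is odd in some
variable. -/
theorem diagOp_iterate_symmetrize {r : ℕ} (c : Fin r → ℂ) (n : ℕ) {a : Fin r → ℝ → ℂ}
    (ha : ∀ k, ContDiffAt ℝ ∞ (a k) 0) {ψ : (Fin r → ℝ) → ℂ} (hψ : SmoothAtZero ψ)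
    (heven : ∀ k, HasParity k 1 ψ) :
    (diagOp c)^[n] (fun θ => (∏ k, a k (θ k)) * ψ θ) 0 =
      (diagOp c)^[n] (fun θ => (∏ k, (a k (θ k) + a k (-θ k)) / 2) * ψ θ) 0 := by
  have han : ∀ k, ContDiffAt ℝ ∞ (fun t => a k (-t)) 0 := fun k =>
    ContDiffAt.comp (0 : ℝ) (f := fun t : ℝ => -t) (by simpa using ha k) contDiff_neg.contDiffAt
  have hE : ∀ k, SmoothAtZero (fun θ : Fin r → ℝ => (a k (θ k) + a k (-θ k)) / 2) := fun k =>
    ((smooth_comp_coord (ha k) k).add (smooth_comp_coord (han k) k)).div_const 2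
  have hO : ∀ k, SmoothAtZero (fun θ : Fin r → ℝ => (a k (θ k) - a k (-θ k)) / 2) := fun k =>
    ((smooth_comp_coord (ha k) k).sub (smooth_comp_coord (han k) k)).div_const 2
  have hexp : (fun θ : Fin r → ℝ => (∏ k, a k (θ k)) * ψ θ) = fun θ =>
      ∑ T ∈ (Finset.univ : Finset (Fin r)).powerset,
        ((∏ k ∈ T, (a k (θ k) + a k (-θ k)) / 2) *
          ∏ k ∈ Finset.univ \ T, (a k (θ k) - a k (-θ k)) / 2) * ψ θ := by
    funext θ
    rw [← Finset.sum_mul, ← Finset.prod_add]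
    congr 1
    exact Finset.prod_congr rfl fun k _ => by ring
  rw [hexp, (diagOp_iterate_sum c n _ fun T _ =>
    ((contDiffAt_prod fun k _ => hE k).mul (contDiffAt_prod fun k _ => hO k)).mul hψ).eq_of_nhds,
    Finset.sum_eq_single_of_mem Finset.univ (by simp)]
  · simp
  · intro T _ hT
    obtain ⟨k, hk⟩ : ∃ k, k ∉ T := by
      by_contra! h
      exact hT (Finset.eq_univ_iff_forall.2 h)
    refine HasParity.diagOp_iterate (k := k) c n fun θ => ?_
    have hk' : k ∈ Finset.univ \ T := by simp [hk]
    have e1 : ∏ j ∈ T, (a j (update θ k (-θ k) j) + a j (-update θ k (-θ k) j)) / 2 =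
        ∏ j ∈ T, (a j (θ j) + a j (-θ j)) / 2 :=
      Finset.prod_congr rfl fun j hj => by rw [update_of_ne (ne_of_mem_of_not_mem hj hk)]
    have e2 : ∏ j ∈ Finset.univ \ T,
          (a j (update θ k (-θ k) j) - a j (-update θ k (-θ k) j)) / 2 =
        -∏ j ∈ Finset.univ \ T, (a j (θ j) - a j (-θ j)) / 2 := by
      rw [← Finset.mul_prod_erase _ _ hk', ← Finset.mul_prod_erase _ _ hk', update_self, neg_neg,
        Finset.prod_congr rfl fun j hj => by rw [update_of_ne (Finset.ne_of_mem_erase hj)]]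
      ring
    rw [e1, e2, heven k θ]
    ring

/-! ### The factors of the amplitude -/

/-- The one-variable factor `(1 - e^{2it}) / (1 - a e^{it})` of the amplitude belonging to a weight
`a < 1`. -/
noncomputable def smallFactor (a : ℝ) (t : ℝ) : ℂ :=
  (1 - Complex.exp (2 * Complex.I * (t : ℂ))) / (1 - (a : ℂ) * Complex.exp (Complex.I * (t : ℂ)))

theorem one_sub_mul_exp_ne_zero {a : ℝ} (h0 : 0 < a) (h1 : a < 1) (t : ℝ) :
    1 - (a : ℂ) * Complex.exp (Complex.I * (t : ℂ)) ≠ 0 := by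
  intro h
  have h2 : ‖(a : ℂ) * Complex.exp (Complex.I * (t : ℂ))‖ = 1 := by
    rw [← sub_eq_zero.1 h, norm_one]
  rw [norm_mul, mul_comm Complex.I, Complex.norm_exp_ofReal_mul_I, mul_one,
    Complex.norm_real, Real.norm_of_nonneg h0.le] at h2
  linarith

theorem contDiff_cexp_mul (z : ℂ) : ContDiff ℝ ∞ fun t : ℝ => Complex.exp (z * (t : ℂ)) :=
  (contDiff_const.mul Complex.ofRealCLM.contDiff).cexp

theorem contDiff_smallFactor {a : ℝ} (h0 : 0 < a) (h1 : a < 1) :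
    ContDiff ℝ ∞ (smallFactor a) := by
  unfold smallFactor
  simp only [div_eq_mul_inv]
  exact (contDiff_const.sub (contDiff_cexp_mul _)).mul
    ((contDiff_const.sub (contDiff_const.mul (contDiff_cexp_mul _))).inv
      (one_sub_mul_exp_ne_zero h0 h1))

/-- With `u = e^{it}`, putting the two reflected factors over a common denominator gives the
numerator `2 - u² - u⁻² = 4 sin² t`. -/
theorem smallFactor_even_part {a : ℝ} (h0 : 0 < a) (h1 : a < 1) (t : ℝ) :
    (smallFactor a t + smallFactor a (-t)) / 2 = Complex.sin t * Complex.sin t *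
      (2 / ((1 - (a : ℂ) * Complex.exp (Complex.I * (t : ℂ))) *
        (1 - (a : ℂ) * Complex.exp (Complex.I * ((-t : ℝ) : ℂ))))) := by
  have n1 := one_sub_mul_exp_ne_zero h0 h1 t
  have n2 := one_sub_mul_exp_ne_zero h0 h1 (-t)
  have e1 : Complex.exp (2 * Complex.I * (t : ℂ)) = Complex.exp (Complex.I * (t : ℂ)) ^ 2 := by
    rw [← Complex.exp_nat_mul]; congr 1; push_cast; ring
  have e2 : Complex.exp (2 * Complex.I * ((-t : ℝ) : ℂ)) =
      Complex.exp (Complex.I * ((-t : ℝ) : ℂ)) ^ 2 := by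
    rw [← Complex.exp_nat_mul]; congr 1; push_cast; ring
  have e3 : Complex.sin t = (Complex.exp (Complex.I * ((-t : ℝ) : ℂ)) -
      Complex.exp (Complex.I * (t : ℂ))) * Complex.I / 2 := by
    rw [Complex.sin]; push_cast; ring_nf
  have e4 : Complex.exp (Complex.I * (t : ℂ)) * Complex.exp (Complex.I * ((-t : ℝ) : ℂ)) = 1 := by
    rw [← Complex.exp_add]; push_cast; ring_nf; simp
  rw [smallFactor, smallFactor, e1, e2, e3]
  generalize Complex.exp (Complex.I * (t : ℂ)) = u at *
  generalize Complex.exp (Complex.I * ((-t : ℝ) : ℂ)) = v at *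
  have hI := Complex.I_sq
  have hN : (1 - u ^ 2) * (1 - (a : ℂ) * v) + (1 - (a : ℂ) * u) * (1 - v ^ 2) =
      ((v - u) * Complex.I) ^ 2 := by
    linear_combination ((a : ℂ) * (u + v) - 2) * e4 - (v - u) ^ 2 * hI
  rw [div_add_div _ _ n1 n2, hN]
  ring

theorem leadingTerm_sin {r : ℕ} (k : Fin r) :
    LeadingTerm 1 (fun θ => Complex.sin (θ k)) (fun θ => (θ k : ℂ)) := by
  have hs : SmoothAtZero (fun θ : Fin r → ℝ => Complex.sin (θ k) - (θ k : ℂ)) :=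
    ((Complex.contDiff_sin.restrict_scalars ℝ).contDiffAt.comp _ (smooth_coord k)).sub
      (smooth_coord k)
  refine ⟨vanishOrder_one (smooth_coord k) (by simp), hs, by simp, fun j =>
    vanishOrder_one (hs.pd j) ?_⟩
  by_cases hj : j = k
  · subst hj
    simp only [pd, update_self, Pi.zero_apply]
    have h0 : HasDerivAt (fun s : ℝ => (s : ℂ)) 1 0 := Complex.ofRealCLM.hasDerivAt
    have h1 : HasDerivAt (fun s : ℝ => Complex.sin (s : ℂ) - (s : ℂ)) _ 0 := 
      (Complex.hasDerivAt_sin _).comp_ofReal.fun_sub h0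
    rw [h1.deriv]
    simp
  · simp [pd, update_of_ne (Ne.symm hj)]

theorem leadingTerm_zero {r : ℕ} {h : ℝ → ℂ} (hh : ContDiffAt ℝ ∞ h 0) (k : Fin r) :
    LeadingTerm 0 (fun θ => h (θ k)) (fun _ => h 0) :=
  ⟨smooth_const _, vanishOrder_one ((smooth_comp_coord hh k).sub contDiffAt_const) (by simp)⟩

theorem leadingTerm_smallFactor {r : ℕ} (k : Fin r) {a : ℝ} (h0 : 0 < a) (h1 : a < 1) :
    LeadingTerm 2 (fun θ => (smallFactor a (θ k) + smallFactor a (-θ k)) / 2)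
      (fun θ => (2 / (1 - (a : ℂ)) ^ 2) * (θ k : ℂ) ^ 2) := by
  have hG : ContDiff ℝ ∞ fun t : ℝ => 2 / ((1 - (a : ℂ) * Complex.exp (Complex.I * (t : ℂ))) *
        (1 - (a : ℂ) * Complex.exp (Complex.I * ((-t : ℝ) : ℂ)))) := by
    have hd : ContDiff ℝ ∞ fun t : ℝ => 1 - (a : ℂ) * Complex.exp (Complex.I * (t : ℂ)) :=
      contDiff_const.sub (contDiff_const.mul (contDiff_cexp_mul _))
    simp only [div_eq_mul_inv]
    exact contDiff_const.mul ((hd.mul (hd.comp contDiff_neg)).inv fun t =>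
      mul_ne_zero (one_sub_mul_exp_ne_zero h0 h1 t) (one_sub_mul_exp_ne_zero h0 h1 (-t)))
  have h2 := ((leadingTerm_sin k).mul (leadingTerm_sin k)).mul
    (leadingTerm_zero (hG.contDiffAt (x := 0)) k)
  simp only [smallFactor_even_part h0 h1]
  convert h2 using 2
  simp
  ring

theorem leadingTerm_oneFactor {r : ℕ} (k : Fin r) :
    LeadingTerm 0 (fun θ => ((1 + Complex.exp (Complex.I * (θ k : ℂ))) +
      (1 + Complex.exp (Complex.I * ((-θ k : ℝ) : ℂ)))) / 2) (fun _ => 2) := by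
  have hG : ContDiff ℝ ∞ fun t : ℝ => 1 + Complex.exp (Complex.I * (t : ℂ)) :=
    contDiff_const.add (contDiff_cexp_mul _)
  have h2 := leadingTerm_zero
    (((hG.add (hG.comp contDiff_neg)).div_const 2).contDiffAt (x := 0)) k
  convert h2 using 2
  simp
  norm_num

/-! ### The phase -/

/-- The phase along a coordinate axis, `log s - log (s - 2p (1 - cos t))`, has the same second
derivative at `t = 0` as `(p / s) t²`. -/
theorem deriv_deriv_phase {s p : ℝ} (hs : 0 < s) :
    deriv (deriv fun t : ℝ => Complex.log (s : ℂ) -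
      Complex.log ((s : ℂ) - (1 - Complex.cos t) * (2 * p)) -
        ((p / s : ℝ) : ℂ) * (t : ℂ) ^ 2) 0 = 0 := by
  have hF : ∀ t : ℝ, HasDerivAt (fun t : ℝ => (s : ℂ) - (1 - Complex.cos t) * (2 * p))
      (-(Complex.sin t * (2 * p))) t := fun t => by
    have h := (((Complex.hasDerivAt_cos (t : ℂ)).comp_ofReal.const_sub 1).mul_const
      (2 * (p : ℂ))).const_sub (s : ℂ)
    exact h.congr_deriv (by ring)
  have hslit : ∀ᶠ t : ℝ in 𝓝 0,
      (s : ℂ) - (1 - Complex.cos t) * (2 * p) ∈ Complex.slitPlane := by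
    refine (hF 0).continuousAt.eventually_mem (Complex.isOpen_slitPlane.mem_nhds ?_)
    simp [hs]
  have h1 : (deriv fun t : ℝ => Complex.log (s : ℂ) -
      Complex.log ((s : ℂ) - (1 - Complex.cos t) * (2 * p)) -
        ((p / s : ℝ) : ℂ) * (t : ℂ) ^ 2) =ᶠ[𝓝 0] fun t : ℝ =>
      Complex.sin t * (2 * p) / ((s : ℂ) - (1 - Complex.cos t) * (2 * p)) -
        ((p / s : ℝ) : ℂ) * (2 * t) := by
    filter_upwards [hslit] with t ht
    have h0 : HasDerivAt (fun s : ℝ => (s : ℂ)) 1 t := Complex.ofRealCLM.hasDerivAt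
    rw [((((hF t).clog_real ht).const_sub (Complex.log (s : ℂ))).fun_sub
      ((h0.fun_pow 2).const_mul ((p / s : ℝ) : ℂ))).deriv]
    simp
    ring
  rw [h1.deriv_eq]
  have h0 : HasDerivAt (fun s : ℝ => (s : ℂ)) 1 0 := Complex.ofRealCLM.hasDerivAt
  have hsC : (s : ℂ) ≠ 0 := by exact_mod_cast hs.ne'
  rw [((((Complex.hasDerivAt_sin _).comp_ofReal.mul_const (2 * (p : ℂ))).fun_div (hF 0)
    (by simpa using hsC)).fun_sub
    ((h0.const_mul 2).const_mul ((p / s : ℝ) : ℂ))).deriv]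
  simp
  field_simp
  ring

theorem sum_reflect {d : ℕ} {S : Finset (Fin d → ℤ)} (hrefl : Reflectable d S) (j : Fin d)
    (G : (Fin d → ℤ) → ℂ) : ∑ σ ∈ S, G (update σ j (-σ j)) = ∑ σ ∈ S, G σ := by
  refine Finset.sum_nbij' (fun σ => update σ j (-σ j)) (fun σ => update σ j (-σ j)) ?_ ?_ ?_ ?_ ?_
  · exact fun σ hσ => hrefl σ hσ j
  · exact fun σ hσ => hrefl σ hσ j
  · intro σ _; simp
  · intro σ _; simp
  · intro σ _; rfl

/-- The weight of a step in `f`, a product over the large weights only, is its term in the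
inventory at `α⁺`, because `α⁺` is one at all other coordinates. -/
theorem prod_large_eq {d r : ℕ} {α αplus : Fin d → ℝ}
    (hlow : ∀ j : Fin d, (j : ℕ) < r → αplus j = 1)
    (hhigh : ∀ j : Fin d, r ≤ (j : ℕ) → αplus j = α j) (σ : Fin d → ℤ) :
    ∏ k ∈ Finset.univ.filter (fun k : Fin d => r ≤ (k : ℕ)), (α k : ℂ) ^ (σ k) =
      ((∏ j, αplus j ^ (σ j) : ℝ) : ℂ) := by
  rw [Finset.prod_filter]
  push_cast
  refine Finset.prod_congr rfl fun j _ => ?_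
  split_ifs with hj
  · rw [hhigh j hj]
  · rw [hlow j (by omega)]; simp

theorem prod_zpow_reflect {d : ℕ} {x : Fin d → ℝ} (j : Fin d) (hj : x j = 1) (σ : Fin d → ℤ) :
    ∏ i, x i ^ (update σ j (-σ j) i) = ∏ i, x i ^ (σ i) := by
  refine Finset.prod_congr rfl fun i _ => ?_
  by_cases hi : i = j
  · subst hi; simp [hj]
  · rw [update_of_ne hi]

theorem inventory_pos {d : ℕ} (hd : 1 ≤ d) {S : Finset (Fin d → ℤ)} (hnt : NontrivialStepset d S)
    {x : Fin d → ℝ} (hx : ∀ j, 0 < x j) : 0 < inventory d S x := by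
  obtain ⟨σ, hσ, -⟩ := hnt ⟨0, hd⟩
  exact Finset.sum_pos (fun τ _ => Finset.prod_pos fun j _ => zpow_pos (hx j) _) ⟨σ, hσ⟩

theorem forward_steps_pos {d : ℕ} {S : Finset (Fin d → ℤ)} (hstep : IsStepset d S)
    (hrefl : Reflectable d S) (hnt : NontrivialStepset d S) {x : Fin d → ℝ} (hx : ∀ j, 0 < x j)
    (k : Fin d) :
    0 < ∑ σ ∈ S.filter (fun σ => σ k = 1), ∏ j ∈ Finset.univ.erase k, x j ^ (σ j) := by
  refine Finset.sum_pos (fun τ _ => Finset.prod_pos fun j _ => zpow_pos (hx j) _) ?_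
  obtain ⟨σ, hσ, h0⟩ := hnt k
  rcases hstep σ hσ k with h | h | h
  · exact ⟨update σ k (-σ k), Finset.mem_filter.2 ⟨hrefl σ hσ k, by simp [h]⟩⟩
  · exact absurd h h0
  · exact ⟨σ, Finset.mem_filter.2 ⟨hσ, h⟩⟩

/-- Reflection cancels `∑ σₖ w(σ)`, so the second moment `∑ σₖ² w(σ)` is twice the weight of the
steps with `σₖ = 1`. -/
theorem sum_sq_eq {d : ℕ} {S : Finset (Fin d → ℤ)} (hstep : IsStepset d S)
    (hrefl : Reflectable d S) {x : Fin d → ℝ} (k : Fin d) (hk : x k = 1) :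
    ∑ σ ∈ S, ((∏ j, x j ^ (σ j) : ℝ) : ℂ) * (σ k : ℂ) ^ 2 =
      2 * ((∑ σ ∈ S.filter (fun σ => σ k = 1), ∏ j ∈ Finset.univ.erase k, x j ^ (σ j) : ℝ) : ℂ) := by
  have h0 : ∑ σ ∈ S, ((∏ j, x j ^ (σ j) : ℝ) : ℂ) * (σ k : ℂ) = 0 := by
    have h := sum_reflect hrefl k fun σ => ((∏ j, x j ^ (σ j) : ℝ) : ℂ) * (σ k : ℂ)
    simp only [prod_zpow_reflect k hk, update_self, Int.cast_neg, mul_neg,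
      Finset.sum_neg_distrib] at h
    linear_combination -h / 2
  have h1 : ((∑ σ ∈ S.filter (fun σ => σ k = 1), ∏ j ∈ Finset.univ.erase k, x j ^ (σ j) : ℝ) : ℂ) =
      ∑ σ ∈ S, if σ k = 1 then ((∏ j, x j ^ (σ j) : ℝ) : ℂ) else 0 := by
    rw [← Finset.sum_filter, Complex.ofReal_sum]
    refine Finset.sum_congr rfl fun σ _ => ?_
    rw [← Finset.mul_prod_erase Finset.univ _ (Finset.mem_univ k), hk, one_zpow, one_mul]
  refine (add_zero _).symm.trans ((congrArg _ h0.symm).trans ?_)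
  rw [h1, Finset.mul_sum, ← Finset.sum_add_distrib]
  refine Finset.sum_congr rfl fun σ hσ => ?_
  rcases hstep σ hσ k with h | h | h
  · simp [h]
  · simp [h]
  · simp [h]; ring

/-- The evaluated inventory `f`, with the large weights absorbed into the weights of the inventory
at `x = α⁺`. -/
noncomputable def charSum {d r : ℕ} (hrd : r ≤ d) (S : Finset (Fin d → ℤ)) (x : Fin d → ℝ)
    (θ : Fin r → ℝ) : ℂ :=
  ∑ σ ∈ S, (∏ k : Fin r, Complex.exp (-Complex.I * (θ k : ℂ) * (σ (Fin.castLE hrd k) : ℂ))) *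
    ((∏ j, x j ^ (σ j) : ℝ) : ℂ)

theorem contDiff_charSum {d r : ℕ} (hrd : r ≤ d) (S : Finset (Fin d → ℤ)) (x : Fin d → ℝ) :
    ContDiff ℝ ∞ (charSum hrd S x) := by
  refine ContDiff.sum fun σ _ => ContDiff.mul (contDiff_prod fun k _ => ?_) contDiff_const
  exact ((contDiff_const.mul
    (Complex.ofRealCLM.contDiff.comp (contDiff_apply ℝ ℝ k))).mul contDiff_const).cexp

theorem charSum_zero {d r : ℕ} (hrd : r ≤ d) (S : Finset (Fin d → ℤ)) (x : Fin d → ℝ) :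
    charSum hrd S x 0 = ((inventory d S x : ℝ) : ℂ) := by
  simp [charSum, inventory]

theorem charSum_even {d r : ℕ} (hrd : r ≤ d) {S : Finset (Fin d → ℤ)} (hrefl : Reflectable d S)
    {x : Fin d → ℝ} (k : Fin r) (hk : x (Fin.castLE hrd k) = 1) :
    HasParity k 1 (charSum hrd S x) := by
  intro θ
  rw [one_mul, charSum, charSum, ← sum_reflect hrefl (Fin.castLE hrd k)]
  refine Finset.sum_congr rfl fun σ _ => ?_
  rw [prod_zpow_reflect _ hk]
  congr 1
  refine Finset.prod_congr rfl fun j _ => ?_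
  by_cases hj : j = k
  · subst hj; simp
  · rw [update_of_ne hj, update_of_ne fun h => hj (Fin.castLE_injective hrd h)]

/-- Along a coordinate axis the inventory is affine in the cosine of the coordinate. -/
theorem charSum_axis {d r : ℕ} (hrd : r ≤ d) {S : Finset (Fin d → ℤ)} (hstep : IsStepset d S)
    (hrefl : Reflectable d S) {x : Fin d → ℝ} (k : Fin r) (hk : x (Fin.castLE hrd k) = 1) (t : ℝ) :
    charSum hrd S x (update 0 k t) = ((inventory d S x : ℝ) : ℂ) - (1 - Complex.cos t) *
      (2 * ((∑ σ ∈ S.filter (fun σ => σ (Fin.castLE hrd k) = 1),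
        ∏ j ∈ Finset.univ.erase (Fin.castLE hrd k), x j ^ (σ j) : ℝ) : ℂ)) := by
  have hline : ∀ t : ℝ, charSum hrd S x (update 0 k t) = ∑ σ ∈ S,
      Complex.exp (-Complex.I * (t : ℂ) * (σ (Fin.castLE hrd k) : ℂ)) *
        ((∏ j, x j ^ (σ j) : ℝ) : ℂ) := by
    intro t
    refine Finset.sum_congr rfl fun σ _ => ?_
    rw [Fintype.prod_eq_single k, update_self]
    intro j hj
    rw [update_of_ne hj]
    simp
  -- averaging over `t` and `-t` turns the exponentials into cosines
  have hsym : charSum hrd S x (update 0 k t) =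
      (charSum hrd S x (update 0 k t) + charSum hrd S x (update 0 k (-t))) / 2 := by
    have h := charSum_even hrd hrefl k hk (update 0 k t)
    rw [update_self, update_idem, one_mul] at h
    rw [h]; ring
  rw [hsym, hline, hline, ← sum_sq_eq hstep hrefl _ hk, inventory, Complex.ofReal_sum,
    Finset.mul_sum, ← Finset.sum_sub_distrib, ← Finset.sum_add_distrib, Finset.sum_div]
  refine Finset.sum_congr rfl fun σ hσ => ?_
  rw [Complex.cos]
  rcases hstep σ hσ (Fin.castLE hrd k) with h | h | h <;> rw [h] <;> push_cast
  · ring_nf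
  · ring_nf; simp
  · ring_nf

/-- The remainder of the phase after removal of its quadratic part. -/
noncomputable def phaseRemainder {d r : ℕ} (hrd : r ≤ d) (S : Finset (Fin d → ℤ))
    (x : Fin d → ℝ) (P : Fin r → ℝ) (θ : Fin r → ℝ) : ℂ :=
  Complex.log ((inventory d S x : ℝ) : ℂ) - Complex.log (charSum hrd S x θ) -
    ∑ k : Fin r, ((P k / inventory d S x : ℝ) : ℂ) * (θ k : ℂ) ^ 2

theorem phaseRemainder_even {d r : ℕ} (hrd : r ≤ d) {S : Finset (Fin d → ℤ)}
    (hrefl : Reflectable d S) {x : Fin d → ℝ} (P : Fin r → ℝ) (k : Fin r)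
    (hk : x (Fin.castLE hrd k) = 1) : HasParity k 1 (phaseRemainder hrd S x P) := by
  intro θ
  rw [one_mul, phaseRemainder, phaseRemainder, charSum_even hrd hrefl k hk, one_mul]
  congr 1
  refine Finset.sum_congr rfl fun j _ => ?_
  by_cases hj : j = k
  · subst hj; simp
  · rw [update_of_ne hj]

/-- Subtracting `∑ (Pₖ / S(α⁺)) θₖ²` removes exactly the quadratic part of the even phase. -/
theorem vanishOrder_phaseRemainder {d r : ℕ} (hrd : r ≤ d) {S : Finset (Fin d → ℤ)}
    (hstep : IsStepset d S) (hrefl : Reflectable d S) {x : Fin d → ℝ}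
    (hpos : 0 < inventory d S x) (hx : ∀ k : Fin r, x (Fin.castLE hrd k) = 1)
    {P : Fin r → ℝ} (hP : ∀ k, P k = ∑ σ ∈ S.filter (fun σ => σ (Fin.castLE hrd k) = 1),
        ∏ j ∈ Finset.univ.erase (Fin.castLE hrd k), x j ^ (σ j)) :
    VanishOrder 4 (phaseRemainder hrd S x P) := by
  have hf0 : charSum hrd S x 0 ∈ Complex.slitPlane := by
    rw [charSum_zero]
    simp [hpos]
  refine vanishOrder_four_of_even ?_ (fun k => phaseRemainder_even hrd hrefl P k (hx k)) ?_ ?_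
  · refine ContDiffAt.sub (contDiffAt_const.sub ?_)
      (ContDiffAt.sum fun k _ => contDiffAt_const.mul ((smooth_coord k).pow 2))
    exact ((Complex.contDiffAt_log hf0).restrict_scalars ℝ).comp (0 : Fin r → ℝ)
      (contDiff_charSum hrd S x).contDiffAt
  · simp [phaseRemainder, charSum_zero]
  · intro k
    rw [pd_pd_eq, Pi.zero_apply]
    convert deriv_deriv_phase (p := P k) hpos using 3
    funext t
    rw [phaseRemainder, charSum_axis hrd hstep hrefl k (hx k), ← hP k,
      Fintype.sum_eq_single k fun j hj => by rw [update_of_ne hj]; simp, update_self]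

/-! ### Counting orders of vanishing -/

/-- Order counting for any remainder `ψ` that is even in each variable and vanishes to order four:
the even part of `A ψ^ℓ` vanishes to order `2m + 4ℓ`, and the even part of `A` has leading term a
nonzero constant times `∏_{k < m} θₖ²`. -/
theorem amplitude_coefficients {r m : ℕ} (hmr : m ≤ r) (c : Fin r → ℂ) (hc : ∀ k, c k ≠ 0)
    {a : Fin r → ℝ}
    (ha0 : ∀ k, 0 < a k) (ha1 : ∀ k : Fin r, (k : ℕ) < m → a k < 1)
    {A : (Fin r → ℝ) → ℂ}
    (hA : ∀ θ, A θ =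
      (∏ k ∈ Finset.univ.filter (fun k : Fin r => (k : ℕ) < m), smallFactor (a k) (θ k)) *
      ∏ k ∈ Finset.univ.filter (fun k : Fin r => m ≤ (k : ℕ)),
          (1 + Complex.exp (Complex.I * (θ k : ℂ))))
    {ψ : (Fin r → ℝ) → ℂ} (hψ : VanishOrder 4 ψ) (heven : ∀ k, HasParity k 1 ψ) :
    (∀ n ℓ : ℕ, 2 * n < 2 * m + 4 * ℓ → (diagOp c)^[n] (fun θ => A θ * ψ θ ^ ℓ) 0 = 0) ∧
      (diagOp c)^[m] A 0 ≠ 0 := by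
  obtain ⟨b, hb⟩ : ∃ b : Fin r → ℝ → ℂ, b = fun (k : Fin r) t =>
      if (k : ℕ) < m then smallFactor (a k) t else 1 + Complex.exp (Complex.I * (t : ℂ)) :=
    ⟨_, rfl⟩
  have hAb : ∀ θ, A θ = ∏ k, b k (θ k) := by
    intro θ
    rw [hA, hb, Finset.prod_ite]
    simp only [not_lt]
  have hbs : ∀ k, ContDiffAt ℝ ∞ (b k) 0 := by
    intro k
    rw [hb]
    by_cases hk : (k : ℕ) < m
    · simp only [hk, if_true]
      exact (contDiff_smallFactor (ha0 k) (ha1 k hk)).contDiffAt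
    · simp only [hk, if_false]
      exact (contDiff_const.add (contDiff_cexp_mul _)).contDiffAt
  have hsymm : ∀ n ℓ : ℕ, (diagOp c)^[n] (fun θ => A θ * ψ θ ^ ℓ) 0 =
      (diagOp c)^[n] (fun θ => (∏ k, (b k (θ k) + b k (-θ k)) / 2) * ψ θ ^ ℓ) 0 := by
    intro n ℓ
    simp only [hAb]
    exact diagOp_iterate_symmetrize c n hbs (hψ.smooth.pow ℓ) fun k => (heven k).even_pow ℓ
  have hcard : (Finset.univ.filter fun k : Fin r => (k : ℕ) < m).card = m := by
    rw [Fin.card_filter_val_lt, min_eq_right hmr]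
  have hlead : LeadingTerm (2 * m) (fun θ => ∏ k, (b k (θ k) + b k (-θ k)) / 2)
      (fun θ => ∏ k : Fin r, if (k : ℕ) < m then (2 / (1 - (a k : ℂ)) ^ 2) * (θ k : ℂ) ^ 2
        else 2) := by
    have h := leadingTerm_prod (r := r) Finset.univ (fun k : Fin r => if (k : ℕ) < m then 2 else 0)
      (g := fun (k : Fin r) θ => (b k (θ k) + b k (-θ k)) / 2)
      (L := fun (k : Fin r) θ => if (k : ℕ) < m then (2 / (1 - (a k : ℂ)) ^ 2) * (θ k : ℂ) ^ 2 else 2)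
      (fun k _ => by
        rw [hb]
        by_cases hk : (k : ℕ) < m
        · simp only [hk, if_true]
          exact leadingTerm_smallFactor k (ha0 k) (ha1 k hk)
        · simp only [hk, if_false]
          exact leadingTerm_oneFactor k)
    rwa [← Finset.sum_filter, Finset.sum_const, hcard, smul_eq_mul, mul_comm] at h
  refine ⟨fun n ℓ hn => ?_, ?_⟩
  · rw [hsymm]
    exact ((hlead.vanish.mul (hψ.pow ℓ)).mono (by omega)).diagOp_iterate c
  · have h0 := hsymm m 0
    simp only [pow_zero, mul_one] at h0
    have hL : (fun θ : Fin r → ℝ => ∏ k : Fin r,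
        if (k : ℕ) < m then (2 / (1 - (a k : ℂ)) ^ 2) * (θ k : ℂ) ^ 2 else 2) = fun θ =>
        (∏ k : Fin r, if (k : ℕ) < m then 2 / (1 - (a k : ℂ)) ^ 2 else 2) *
          ∏ k ∈ Finset.univ.filter (fun k : Fin r => (k : ℕ) < m), (θ k : ℂ) ^ 2 := by
      funext θ
      rw [Finset.prod_filter, ← Finset.prod_mul_distrib]
      exact Finset.prod_congr rfl fun k _ => by split_ifs <;> simp
    rw [h0, diagOp_iterate_leadingTerm c hlead, hL, diagOp_iterate_const_mul]
    beta_reduce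
    rw [diagOp_iterate_prod_sq c m _ hcard]
    refine mul_ne_zero (Finset.prod_ne_zero_iff.2 fun k _ => ?_)
      (mul_ne_zero (by exact_mod_cast m.factorial_ne_zero)
        (Finset.prod_ne_zero_iff.2 fun k _ => mul_ne_zero two_ne_zero (hc k)))
    split_ifs with hk
    · refine div_ne_zero two_ne_zero (pow_ne_zero 2 (sub_ne_zero.2 ?_))
      exact_mod_cast (ha1 k hk).ne'
    · exact two_ne_zero

end Helpers

/-- Lemma: only the constant `C_m` survives, and only through its `ℓ = 0` term. -/
theorem first_nonzero_coefficient
    (d : ℕ) (hd : 1 ≤ d) (S : Finset (Fin d → ℤ))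
    (hstep : IsStepset d S) (hrefl : Reflectable d S) (hnt : NontrivialStepset d S)
    (α : Fin d → ℝ) (hα : ∀ j, 0 < α j)
    (m r : ℕ) (hmr : m ≤ r) (hrd : r ≤ d)
    -- the weights are ordered: α_1 ≤ ⋯ ≤ α_m < 1 = α_{m+1} = ⋯ = α_r < α_{r+1} ≤ ⋯ ≤ α_d
    (hmono : Monotone α)
    (hsmall : ∀ j : Fin d, (j : ℕ) < m → α j < 1)
    (hone : ∀ j : Fin d, m ≤ (j : ℕ) → (j : ℕ) < r → α j = 1)
    (hbig : ∀ j : Fin d, r ≤ (j : ℕ) → 1 < α j)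
    (αplus : Fin d → ℝ) (hαplus : ∀ j, αplus j = max (α j) 1)
    -- the amplitude A
    (A : (Fin r → ℝ) → ℂ)
    (hA : ∀ θ, A θ =
      (∏ k ∈ Finset.univ.filter (fun k : Fin r => (k : ℕ) < m),
          (1 - Complex.exp (2 * Complex.I * (θ k : ℂ))) /
            (1 - (α (Fin.castLE hrd k) : ℂ) * Complex.exp (Complex.I * (θ k : ℂ)))) *
      ∏ k ∈ Finset.univ.filter (fun k : Fin r => m ≤ (k : ℕ)),
          (1 + Complex.exp (Complex.I * (θ k : ℂ))))
    -- the evaluated inventory f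
    (f : (Fin r → ℝ) → ℂ)
    (hf : ∀ θ, f θ =
      ∑ σ ∈ S, (∏ k : Fin r,
          Complex.exp (-Complex.I * (θ k : ℂ) * (σ (Fin.castLE hrd k) : ℂ))) *
        ∏ k ∈ Finset.univ.filter (fun k : Fin d => r ≤ (k : ℕ)), (α k : ℂ) ^ (σ k))
    -- the phase φ (principal logarithm)
    (φ : (Fin r → ℝ) → ℂ)
    (hφ : ∀ θ, φ θ = Complex.log ((inventory d S αplus : ℝ) : ℂ) - Complex.log (f θ))
    -- P_k = Σ_{σ∈S, σ_k=1} Π_{j≠k} (α_j⁺)^{σ_j}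
    (P : Fin r → ℝ)
    (hP : ∀ k, P k = ∑ σ ∈ S.filter (fun σ => σ (Fin.castLE hrd k) = 1),
        ∏ j ∈ Finset.univ.erase (Fin.castLE hrd k), αplus j ^ (σ j))
    -- the Pemantle–Wilson operator D = Σ_k (S(α⁺)/(2P_k)) ∂²/∂θ_k²
    (D : ((Fin r → ℝ) → ℂ) → ((Fin r → ℝ) → ℂ))
    (hD : ∀ g θ, D g θ =
      ∑ k : Fin r, ((inventory d S αplus / (2 * P k) : ℝ) : ℂ) * pd k (pd k g) θ)
    -- φ̄ : φ minus its degree-two Taylor polynomial at 0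
    (φb : (Fin r → ℝ) → ℂ)
    (hφb : ∀ θ, φb θ = φ θ -
      ∑ k : Fin r, ((P k / inventory d S αplus : ℝ) : ℂ) * (θ k : ℂ) ^ 2) :
    -- (i) all earlier coefficients vanish
    (∀ j : ℕ, j < m → ∀ ℓ : ℕ, ℓ ≤ 2 * j →
      (D^[ℓ + j] (fun θ => A θ * (φb θ) ^ ℓ)) 0 = 0) ∧
    -- (ii) in C_m, only the ℓ = 0 term survives
    (∀ ℓ : ℕ, 1 ≤ ℓ → (D^[ℓ + m] (fun θ => A θ * (φb θ) ^ ℓ)) 0 = 0) ∧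
    -- (iii) the ℓ = 0 term of C_m is nonzero
    (D^[m] A) 0 ≠ 0 := by
  have hlow : ∀ j : Fin d, (j : ℕ) < r → αplus j = 1 := by
    intro j hj
    rw [hαplus]
    by_cases hjm : (j : ℕ) < m
    · exact max_eq_right (hsmall j hjm).le
    · rw [hone j (by omega) hj, max_self]
  have hhigh : ∀ j : Fin d, r ≤ (j : ℕ) → αplus j = α j := fun j hj => by
    rw [hαplus, max_eq_left (hbig j hj).le]
  have hx : ∀ j, 0 < αplus j := fun j => by
    rw [hαplus]; exact lt_max_of_lt_right one_pos
  have hx1 : ∀ k : Fin r, αplus (Fin.castLE hrd k) = 1 := fun k => hlow _ k.2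
  have hpos := inventory_pos hd hnt hx
  have hφb' : φb = phaseRemainder hrd S αplus P := by
    funext θ
    rw [hφb, hφ, hf, phaseRemainder, charSum]
    simp only [prod_large_eq hlow hhigh]
  obtain ⟨c, hc⟩ : ∃ c : Fin r → ℂ, c = fun k =>
      ((inventory d S αplus / (2 * P k) : ℝ) : ℂ) := ⟨_, rfl⟩
  have hD' : D = diagOp c := by
    funext g θ
    rw [hD, hc, diagOp]
  have hc0 : ∀ k, c k ≠ 0 := by
    intro k
    have hPk : 0 < P k := by
      rw [hP]
      exact forward_steps_pos hstep hrefl hnt hx _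
    rw [hc, Ne, Complex.ofReal_eq_zero]
    positivity
  obtain ⟨h1, h2⟩ := amplitude_coefficients hmr c hc0 (a := fun k => α (Fin.castLE hrd k)) (fun k => hα _)
    (fun k hk => hsmall _ hk) hA (vanishOrder_phaseRemainder hrd hstep hrefl hpos hx1 hP)
    (fun k => phaseRemainder_even hrd hrefl P k (hx1 k))
  rw [hD', hφb']
  exact ⟨fun j hj ℓ _ => h1 _ _ (by omega), fun ℓ hℓ => h1 _ _ (by omega), h2⟩
end

section
/- Let S ⊆ {−1,0,1}^d be a nontrivial reflectable stepset, let ω : S → ℝ_{>0} satisfy ω(σ') = ω(σ) whenever σ' is obtained from σ by negating one coordinate, and let α ∈ (ℝ_{>0})^d. Define q_{α,ω}(n) as the sum over orthant-confined walks (w_1,…,w_n) of length n of (∏_{i=1}^n ω(w_i))·α_1^{p_1}⋯α_d^{p_d}, where p is the endpoint, and define S_ω(x) := Σ_{σ∈S} ω(σ) x_1^{σ_1}⋯x_d^{σ_d}. Then there exist positive constants γ₀ and γ₁ such that q_{α,ω}(n)·S_ω(α⁺)^{−n}·n^{r/2+m} converges to γ₀ as n → ∞ through even integers and to γ₁ through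 odd integers; in particular q_{α,ω}(n) grows like a positive constant times S_ω(α⁺)^n·n^{−(r/2)−m}. -/
/-!
The weighting is invariant under every axis reflection, so one may flip the sign of any coordinate
of any single step without changing the `ω`-weight of a walk. Averaging over all these sign changes
decouples the coordinates: with `k_j` the number of steps that move coordinate `j`,
`q(n) = ∑_w (∏ ω(w_i)) ∏_j h_j(k_j)`, the sum being over *all* walks (`qcountFrom_eq`). Here
`h_j(k) = endVal (α j) k 0` is the expectation of `α_j` to the power of the endpoint, for a simple
`±1` walk of `k` steps killed when it becomes negative. In the same way `S_ω(α⁺)` is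
`∑_σ ω(σ) ∏ β_j` with the product over the `j` moved by `σ`, where `β_j = (α_j⁺ + 1/α_j⁺)/2`
(`inventoryW_eq`). Hence `q(n) / S_ω(α⁺)^n = E[∏_j g_j(k_j)]`, where `g_j(k) = h_j(k) / β_j^k` takes
values in `[0, 1]` and the steps are independent with law proportional to `ω(σ) ∏ β_j`.

* One dimension (`endVal_asymp`): `k^a g(k) = u + v (-1)^k + o(1)` with `|v| < u`, where `a` is `0`,
  `1/2` or `3/2` according as `α > 1`, `α = 1` or `α < 1`. Everything follows from the recursion
  `h(k+1) = ((α + α⁻¹)/2) h(k) - (α⁻¹/2) z(k)` (`endVal_rec`), where `z(k)` is the probability that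
  the killed walk is at `0` after `k` steps; `z(2n)` is a Catalan number over `4^n`, and the Wallis
  product gives its asymptotics.
* Concentration (`wexp_tendsto_zero`): `k_j / n` is within any `δ` of its mean `p_j > 0` outside an
  event of exponentially small probability, so `n^(∑ a_j) E[∏ g_j(k_j)]` differs by `o(1)` from
  `E[∏_j p_j^(-a_j) (u_j + v_j (-1)^(k_j))]`.
* Parity (`wexp_parity`): expanding the product, the last expectation is a linear combination of
  `n`-th powers of real numbers in `[-1, 1]`, so it converges along even and along odd `n`. It is
  bounded below by `∏ p_j^(-a_j) (u_j - |v_j|) > 0`, which makes both limits positive.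
-/

open scoped BigOperators Classical

def Confined (d : ℕ) {n : ℕ} (w : Fin n → (Fin d → ℤ)) : Prop :=
  ∀ k : ℕ, k ≤ n → ∀ j,
    0 ≤ ∑ i ∈ Finset.univ.filter (fun i : Fin n => (i : ℕ) < k), w i j

/-- The `ω`-and-`α`-weighted count `q_{α,ω}(n)`. -/
noncomputable def qcountW (d : ℕ) (S : Finset (Fin d → ℤ)) (ω : (Fin d → ℤ) → ℝ)
    (α : Fin d → ℝ) (n : ℕ) : ℝ :=
  ∑ w ∈ Finset.univ.filter
      (fun w : Fin n → {σ // σ ∈ S} => Confined d (fun i => (w i).1)),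
    (∏ i, ω (w i).1) * ∏ j, α j ^ (∑ i, (w i).1 j)

/-- The `ω`-weighted inventory `S_ω(x) = Σ_{σ∈S} ω(σ) x^σ`. -/
noncomputable def inventoryW (d : ℕ) (S : Finset (Fin d → ℤ)) (ω : (Fin d → ℤ) → ℝ)
    (x : Fin d → ℝ) : ℝ :=
  ∑ σ ∈ S, ω σ * ∏ j, x j ^ (σ j)

open Filter Topology

/-! ### Simple walks on the half-line -/

/-- One step of the simple random walk on `ℤ` killed on the negative integers, acting on functions.
The result is set to `0` at negative points. -/
noncomputable def killStep : (ℤ → ℝ) →ₗ[ℝ] (ℤ → ℝ) where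
  toFun φ x := if 0 ≤ x then (φ (x + 1) + φ (x - 1)) / 2 else 0
  map_add' φ ψ := by
    funext x
    simp only [Pi.add_apply]
    split_ifs <;> ring
  map_smul' c φ := by
    funext x
    simp only [Pi.smul_apply, smul_eq_mul, RingHom.id_apply]
    split_ifs <;> ring

theorem killStep_apply (φ : ℤ → ℝ) (x : ℤ) :
    killStep φ x = if 0 ≤ x then (φ (x + 1) + φ (x - 1)) / 2 else 0 := rfl

/-- The function `x ↦ α ^ x` on the half-line, extended by `0`. -/
noncomputable def killExp (α : ℝ) : ℤ → ℝ := fun x => if 0 ≤ x then α ^ x else 0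

/-- The indicator function of the origin. -/
noncomputable def killDelta : ℤ → ℝ := fun x => if x = 0 then 1 else 0

/-- Expectation of `α ^ (endpoint)` for the `k`-step simple walk started at `x` and killed when it
becomes negative. -/
noncomputable def endVal (α : ℝ) (k : ℕ) (x : ℤ) : ℝ := (killStep ^ k) (killExp α) x

/-- Probability that the `k`-step killed simple walk started at `0` ends at `0`. -/
noncomputable def retProb (k : ℕ) : ℝ := (killStep ^ k) killDelta 0

/-- The eigenvalue `(α + α⁻¹) / 2` of the free walk on `x ↦ α ^ x`; `halfSum (max α 1)` is the
exponential growth rate of `endVal α`. -/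
noncomputable def halfSum (α : ℝ) : ℝ := (α + α⁻¹) / 2

theorem endVal_zero (α : ℝ) (x : ℤ) : endVal α 0 x = if 0 ≤ x then α ^ x else 0 := rfl

theorem endVal_neg (α : ℝ) (k : ℕ) (x : ℤ) (hx : x < 0) : endVal α k x = 0 := by
  cases k with
  | zero => simp [endVal_zero, not_le.2 hx]
  | succ k => simp [endVal, pow_succ', killStep_apply, not_le.2 hx]

theorem endVal_succ (α : ℝ) (k : ℕ) (x : ℤ) (hx : 0 ≤ x) :
    endVal α (k + 1) x = (endVal α k (x + 1) + endVal α k (x - 1)) / 2 := by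
  simp [endVal, pow_succ', killStep_apply, hx]

/-- `x ↦ α ^ x` is an eigenfunction of the killed walk up to a defect at the origin, where the step
to `-1` is lost. -/
theorem killStep_killExp {α : ℝ} (hα : 0 < α) :
    killStep (killExp α) = halfSum α • killExp α - (α⁻¹ / 2) • killDelta := by
  funext x
  simp only [killStep_apply, killExp, killDelta, halfSum, Pi.sub_apply, Pi.smul_apply, smul_eq_mul]
  rcases lt_trichotomy x 0 with h | h | h
  · simp [not_le.2 h, h.ne]
  · subst h; norm_num; ring
  · have h1 : 0 ≤ x + 1 := by omega
    have h2 : 0 ≤ x - 1 := by omega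
    simp only [h.le, h1, h2, h.ne', if_true, if_false, zpow_add₀ hα.ne', zpow_sub₀ hα.ne', zpow_one]
    field_simp
    ring

theorem endVal_rec {α : ℝ} (hα : 0 < α) (k : ℕ) :
    endVal α (k + 1) 0 = halfSum α * endVal α k 0 - α⁻¹ / 2 * retProb k := by
  simp [endVal, retProb, pow_succ, killStep_killExp hα]

theorem killPow_mono (k : ℕ) {φ ψ : ℤ → ℝ} (h : ∀ x, φ x ≤ ψ x) (x : ℤ) :
    (killStep ^ k) φ x ≤ (killStep ^ k) ψ x := by
  induction k generalizing x with
  | zero => simpa using h x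
  | succ k ih =>
    simp only [pow_succ', Module.End.mul_apply, killStep_apply]
    split_ifs
    · linarith [ih (x + 1), ih (x - 1)]
    · exact le_rfl

theorem endVal_nonneg {α : ℝ} (hα : 0 < α) (k : ℕ) (x : ℤ) : 0 ≤ endVal α k x := by
  have := killPow_mono k (φ := 0) (ψ := killExp α)
    (fun x => by simp only [killExp, Pi.zero_apply]; split_ifs <;> positivity) x
  simpa [endVal] using this

theorem retProb_nonneg (k : ℕ) : 0 ≤ retProb k := by
  have := killPow_mono k (φ := 0) (ψ := killDelta)
    (fun x => by simp only [killDelta, Pi.zero_apply]; split_ifs <;> positivity) 0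
  simpa [retProb] using this

theorem halfSum_one : halfSum 1 = 1 := by norm_num [halfSum]

theorem halfSum_one_le {α : ℝ} (hα : 0 < α) : 1 ≤ halfSum α := by
  unfold halfSum
  have : α + α⁻¹ - 2 = (α - 1) ^ 2 / α := by field_simp; ring
  have h2 : 0 ≤ (α - 1) ^ 2 / α := by positivity
  linarith

theorem halfSum_one_lt {α : ℝ} (hα : 0 < α) (h1 : α ≠ 1) : 1 < halfSum α := by
  unfold halfSum
  have : α + α⁻¹ - 2 = (α - 1) ^ 2 / α := by field_simp; ring
  have h2 : 0 < (α - 1) ^ 2 / α := by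
    have : α - 1 ≠ 0 := sub_ne_zero.2 h1
    positivity
  linarith

theorem halfSum_inv (α : ℝ) : halfSum α⁻¹ = halfSum α := by
  simp [halfSum, add_comm]

theorem endVal_le_pow {α : ℝ} (hα : 0 < α) (k : ℕ) : endVal α k 0 ≤ halfSum α ^ k := by
  induction k with
  | zero => simp [endVal_zero]
  | succ k ih =>
    rw [endVal_rec hα, pow_succ']
    have := retProb_nonneg k
    have h2 : 0 ≤ α⁻¹ / 2 * retProb k := by positivity
    have h3 := mul_le_mul_of_nonneg_left ih (zero_le_one.trans (halfSum_one_le hα))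
    linarith

theorem endVal_le_one {α : ℝ} (hα : 0 < α) (h1 : α ≤ 1) (k : ℕ) : endVal α k 0 ≤ 1 := by
  have h := killPow_mono k (φ := killExp α) (ψ := killExp 1) (fun x => by
    simp only [killExp, one_zpow]
    split_ifs with hx
    · lift x to ℕ using hx
      simpa using pow_le_one₀ hα.le h1
    · exact le_rfl) 0
  have h2 := endVal_le_pow one_pos k
  rw [halfSum_one, one_pow] at h2
  exact h.trans h2

/-- The normalised quantity `endVal α k 0 / halfSum (max α 1) ^ k` is at most `1`. -/
theorem endVal_bound {α : ℝ} (hα : 0 < α) (k : ℕ) :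
    endVal α k 0 ≤ halfSum (max α 1) ^ k := by
  rcases le_total α 1 with h | h
  · rw [max_eq_right h, halfSum_one, one_pow]; exact endVal_le_one hα h k
  · rw [max_eq_left h]; exact endVal_le_pow hα k

/-- Reflection principle: `2 ^ k` times the probability that the killed walk goes from
`2a - k` to `0` in `k` steps is `C(k, a) - C(k, a + 1)`. The point `-1` is included, where both
sides vanish by symmetry of the binomial coefficients. -/
theorem killDelta_pow (k : ℕ) : (∀ a : ℕ, -1 ≤ 2 * (a : ℤ) - k →
      2 ^ k * (killStep ^ k) killDelta (2 * (a : ℤ) - k) = (k.choose a : ℝ) - k.choose (a + 1)) ∧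
    ∀ x : ℤ, (x + k) % 2 = 1 → (killStep ^ k) killDelta x = 0 := by
  induction k with
  | zero =>
    constructor
    · intro a ha
      rcases Nat.eq_zero_or_pos a with rfl | h
      · simp [killDelta]
      · simp [killDelta, Nat.choose_eq_zero_of_lt h, h.ne']
    · intro x hx
      have : x ≠ 0 := by rintro rfl; simp at hx
      simp [killDelta, this]
  | succ k ih =>
    obtain ⟨ih1, ih2⟩ := ih
    constructor
    · intro a ha
      simp only [pow_succ' killStep, Module.End.mul_apply, killStep_apply]
      rcases ha.eq_or_lt with h | h
      · have hk : k = 2 * a := by push_cast at h; omega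
        subst hk
        rw [← h]
        -- the start is `-1`, and `C(2a + 1, a) = C(2a + 1, a + 1)`
        have := Nat.choose_symm_half a
        simp [this]
      · push_cast at h ⊢
        rw [if_pos (by omega)]
        obtain ⟨a, rfl⟩ : ∃ b, a = b + 1 := ⟨a - 1, by omega⟩
        have e1 := ih1 (a + 1) (by push_cast; omega)
        have e2 := ih1 a (by push_cast at h; omega)
        rw [show (2 * ((a + 1 : ℕ) : ℤ) - (k + 1) + 1) = 2 * ((a + 1 : ℕ) : ℤ) - k by ring,
          show (2 * ((a + 1 : ℕ) : ℤ) - (k + 1) - 1) = 2 * (a : ℤ) - k by push_cast; ring,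
          Nat.choose_succ_succ, Nat.choose_succ_succ k (a + 1), pow_succ]
        push_cast at e1 e2 ⊢
        linarith
    · intro x hx
      push_cast at hx
      simp only [pow_succ' killStep, Module.End.mul_apply, killStep_apply]
      rw [ih2 (x + 1) (by omega), ih2 (x - 1) (by omega)]
      simp

/-- The central binomial probability `C(2n, n) / 4 ^ n`. -/
noncomputable def centralProb (n : ℕ) : ℝ := (n.centralBinom : ℝ) / 4 ^ n

theorem centralProb_pos (n : ℕ) : 0 < centralProb n := by
  have : (0 : ℝ) < n.centralBinom := by exact_mod_cast n.centralBinom_pos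
  unfold centralProb; positivity

theorem centralProb_succ (n : ℕ) :
    centralProb (n + 1) = centralProb n * ((2 * n + 1) / (2 * n + 2)) := by
  have h : ((n : ℝ) + 1) * (n + 1).centralBinom = 2 * (2 * n + 1) * n.centralBinom := by
    exact_mod_cast Nat.succ_mul_centralBinom_succ n
  have h' : ((n + 1).centralBinom : ℝ) = 2 * (2 * n + 1) * n.centralBinom / (n + 1) := by
    field_simp; linarith
  unfold centralProb
  rw [h', pow_succ]
  field_simp
  ring

theorem retProb_odd (n : ℕ) : retProb (2 * n + 1) = 0 :=
  (killDelta_pow (2 * n + 1)).2 0 (by push_cast; omega)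

theorem retProb_even (n : ℕ) : retProb (2 * n) = centralProb n / (n + 1) := by
  have h := (killDelta_pow (2 * n)).1 n (by push_cast; omega)
  rw [show 2 * (n : ℤ) - ((2 * n : ℕ) : ℤ) = 0 by push_cast; ring] at h
  have h2 : ((2 * n).choose (n + 1) : ℝ) * (n + 1) = (2 * n).choose n * n := by
    have := Nat.choose_succ_right_eq (2 * n) n
    rw [show 2 * n - n = n by omega] at this
    exact_mod_cast this
  have h3 : ((2 * n).choose (n + 1) : ℝ) = (2 * n).choose n * n / (n + 1) := by
    field_simp; linarith
  rw [h3, pow_mul] at h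
  unfold retProb centralProb Nat.centralBinom
  norm_num at h
  field_simp at h ⊢
  linarith

theorem centralProb_sq (n : ℕ) : centralProb n ^ 2 * (2 * n + 1) = (Real.Wallis.W n)⁻¹ := by
  induction n with
  | zero => simp [centralProb, Real.Wallis.W]
  | succ n ih =>
    rw [Real.Wallis.W_succ, mul_inv, ← ih, centralProb_succ]
    push_cast
    field_simp
    ring

theorem tendsto_centralProb :
    Tendsto (fun n : ℕ => ((2 * n : ℕ) : ℝ) ^ (1 / 2 : ℝ) * centralProb n) atTop
      (𝓝 (√(2 / Real.pi))) := by
  have h1 : Tendsto (fun n : ℕ => centralProb n ^ 2 * (2 * n + 1)) atTop (𝓝 (2 / Real.pi)) := by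
    simp_rw [centralProb_sq]
    have := Real.Wallis.tendsto_W_nhds_pi_div_two.inv₀ (by positivity)
    rwa [inv_div] at this
  have h2 : Tendsto (fun n : ℕ => (((2 * n : ℕ) : ℝ) / ((2 * n : ℕ) + 1))) atTop (𝓝 1) :=
    (tendsto_natCast_div_add_atTop (1 : ℝ)).comp
      (tendsto_id.const_mul_atTop' (by norm_num : 0 < 2))
  have h3 := (h1.mul h2).sqrt
  rw [mul_one] at h3
  refine h3.congr fun n => ?_
  rw [← Real.sqrt_eq_rpow, show centralProb n ^ 2 * (2 * n + 1) * (((2 * n : ℕ) : ℝ) / ((2 * n : ℕ) + 1))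
    = ((2 * n : ℕ) : ℝ) * centralProb n ^ 2 by push_cast; field_simp, Real.sqrt_mul (by positivity),
    Real.sqrt_sq (centralProb_pos n).le]

/-- The killed walk survives `2n` steps with probability `C(2n, n) / 4 ^ n`. -/
theorem endVal_one_even (n : ℕ) : endVal 1 (2 * n) 0 = centralProb n := by
  induction n with
  | zero => simp [endVal_zero, centralProb]
  | succ n ih =>
    rw [show 2 * (n + 1) = 2 * n + 1 + 1 by ring, endVal_rec one_pos, endVal_rec one_pos, ih,
      retProb_odd, retProb_even, halfSum_one, centralProb_succ]
    field_simp
    ring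

theorem endVal_one_odd (n : ℕ) : endVal 1 (2 * n + 1) 0 = centralProb (n + 1) := by
  rw [endVal_rec one_pos, endVal_one_even, retProb_even, halfSum_one, centralProb_succ]
  field_simp
  ring

/-! ### Asymptotics in one dimension -/

theorem tendsto_of_even_odd_parts {f : ℕ → ℝ} {l : ℝ}
    (h0 : Tendsto (fun n => f (2 * n)) atTop (𝓝 l))
    (h1 : Tendsto (fun n => f (2 * n + 1)) atTop (𝓝 l)) : Tendsto f atTop (𝓝 l) := by
  rw [Metric.tendsto_atTop] at *
  intro ε hε
  obtain ⟨N0, h0⟩ := h0 ε hε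
  obtain ⟨N1, h1⟩ := h1 ε hε
  refine ⟨2 * (N0 + N1) + 1, fun n hn => ?_⟩
  rcases Nat.even_or_odd' n with ⟨k, rfl | rfl⟩
  · exact h0 k (by omega)
  · exact h1 k (by omega)

/-- The polynomial decay exponent contributed by one coordinate: `0`, `1/2` or `3/2` according as
`α > 1`, `α = 1` or `α < 1`. -/
noncomputable def decayExp (α : ℝ) : ℝ := (if α ≤ 1 then 1 / 2 else 0) + if α < 1 then 1 else 0

theorem tendsto_ratio_rpow (i : ℕ) (s : ℝ) :
    Tendsto (fun k : ℕ => ((k : ℝ) / (k + i)) ^ s) atTop (𝓝 1) := by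
  have := (tendsto_natCast_div_add_atTop (𝕜 := ℝ) (i : ℝ)).rpow_const (p := s) (by left; norm_num)
  simpa using this

theorem tendsto_two_mul : Tendsto (fun n : ℕ => 2 * n) atTop atTop :=
  tendsto_id.const_mul_atTop' (by norm_num : 0 < 2)

/-- For `α > 1` the walk survives forever with positive probability under the drifted law, and the
normalised expectation converges to `1 - α⁻²`. -/
theorem endVal_asymp_gt {α : ℝ} (h1 : 1 < α) :
    Tendsto (fun k : ℕ => endVal α k 0 / halfSum α ^ k) atTop (𝓝 (1 - α⁻¹ ^ 2)) := by
  have hα : 0 < α := by linarith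
  have hβ := halfSum_one_lt hα h1.ne'
  -- `α ^ x - α ^ (-x - 2)` vanishes at `-1`, so it is an exact eigenfunction of the killed walk
  have key : ∀ k, endVal α k 0 = halfSum α ^ k * (1 - α⁻¹ ^ 2) + α⁻¹ ^ 2 * endVal α⁻¹ k 0 := by
    intro k
    induction k with
    | zero => simp [endVal_zero]
    | succ k ih =>
      rw [endVal_rec hα, endVal_rec (inv_pos.2 hα), ih, halfSum_inv, inv_inv, pow_succ]
      field_simp
      ring
  have h0 : Tendsto (fun k : ℕ => endVal α⁻¹ k 0 / halfSum α ^ k) atTop (𝓝 0) := by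
    refine squeeze_zero (g := fun k : ℕ => (halfSum α)⁻¹ ^ k) (fun k => ?_) (fun k => ?_)
      (tendsto_pow_atTop_nhds_zero_of_lt_one (by positivity) (inv_lt_one_of_one_lt₀ hβ))
    · have := endVal_nonneg (inv_pos.2 hα) k 0
      positivity
    · rw [inv_pow, div_eq_mul_inv]
      exact mul_le_of_le_one_left (by positivity)
        (endVal_le_one (inv_pos.2 hα) (inv_le_one_of_one_le₀ h1.le) k)
  have h2 := (h0.const_mul (α⁻¹ ^ 2)).const_add (1 - α⁻¹ ^ 2)
  rw [mul_zero, add_zero] at h2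
  refine h2.congr fun k => ?_
  rw [key k]
  field_simp

theorem endVal_asymp_one :
    Tendsto (fun k : ℕ => (k : ℝ) ^ (1 / 2 : ℝ) * endVal 1 k 0) atTop (𝓝 (√(2 / Real.pi))) := by
  apply tendsto_of_even_odd_parts
  · simp_rw [endVal_one_even]
    exact tendsto_centralProb
  · simp_rw [endVal_one_odd]
    have h1 := tendsto_centralProb.comp (tendsto_add_atTop_nat 1)
    have h2 := (tendsto_ratio_rpow 1 (1 / 2)).comp
      ((tendsto_add_atTop_nat 1).comp tendsto_two_mul)
    have h3 := h2.mul h1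
    rw [one_mul] at h3
    refine h3.congr fun n => ?_
    simp only [Function.comp]
    rw [← mul_assoc, ← Real.mul_rpow (by positivity) (by positivity)]
    congr 2
    push_cast
    field_simp
    ring

theorem retProb_asymp :
    Tendsto (fun k : ℕ => (k : ℝ) ^ (3 / 2 : ℝ) * retProb k
      - 2 * √(2 / Real.pi) * ((1 + (-1) ^ k) / 2)) atTop (𝓝 0) := by
  apply tendsto_of_even_odd_parts
  · have h2 : Tendsto (fun n : ℕ => (2 * ((n : ℝ) / (n + 1)))) atTop (𝓝 (2 * 1)) :=
      (tendsto_natCast_div_add_atTop (1 : ℝ)).const_mul 2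
    have h3 := (tendsto_centralProb.mul h2).sub_const (2 * √(2 / Real.pi))
    rw [show √(2 / Real.pi) * (2 * 1) - 2 * √(2 / Real.pi) = 0 by ring] at h3
    refine h3.congr' ?_
    filter_upwards [eventually_gt_atTop 0] with n hn
    have hn' : (0 : ℝ) < ((2 * n : ℕ) : ℝ) := by positivity
    rw [retProb_even, show (3 / 2 : ℝ) = 1 / 2 + 1 by norm_num, Real.rpow_add hn', Real.rpow_one,
      pow_mul]
    push_cast
    field_simp
    norm_num
    ring
  · refine tendsto_const_nhds.congr fun n => ?_
    simp [retProb_odd, pow_succ, pow_mul]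

/-- For `α < 1` the eigenvalue exceeds `1`, so the recursion `endVal_rec` is solved from infinity. -/
theorem endVal_hasSum {α : ℝ} (h0 : 0 < α) (h1 : α < 1) (k : ℕ) :
    HasSum (fun i : ℕ => α⁻¹ / 2 * (halfSum α)⁻¹ ^ (i + 1) * retProb (k + i)) (endVal α k 0) := by
  have hβ := halfSum_one_lt h0 h1.ne
  have hβ0 : 0 < halfSum α := by linarith
  rw [hasSum_iff_tendsto_nat_of_nonneg (fun i => by
    have := retProb_nonneg (k + i)
    positivity)]
  have key : ∀ N : ℕ, endVal α k 0 - (halfSum α)⁻¹ ^ N * endVal α (k + N) 0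
      = ∑ i ∈ Finset.range N, α⁻¹ / 2 * (halfSum α)⁻¹ ^ (i + 1) * retProb (k + i) := by
    intro N
    induction N with
    | zero => simp
    | succ N ih =>
      rw [Finset.sum_range_succ, ← ih, ← add_assoc, endVal_rec h0, pow_succ]
      field_simp
      ring
  have h2 : Tendsto (fun N : ℕ => (halfSum α)⁻¹ ^ N * endVal α (k + N) 0) atTop (𝓝 0) := by
    refine squeeze_zero (g := fun k : ℕ => (halfSum α)⁻¹ ^ k) (fun N => ?_) (fun N => ?_)
      (tendsto_pow_atTop_nhds_zero_of_lt_one (by positivity) (inv_lt_one_of_one_lt₀ hβ))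
    · have := endVal_nonneg h0 (k + N) 0
      positivity
    · exact mul_le_of_le_one_right (by positivity) (endVal_le_one h0 h1.le _)
  have h3 := h2.const_sub (endVal α k 0)
  rw [sub_zero] at h3
  exact h3.congr key

/-- Asymptotics of `k ^ (3/2) * retProb (k + i)` for fixed `i`, with a bound uniform in `k` and `i`, as
needed to sum over `i` by dominated convergence. -/
theorem retProb_shift :
    ∃ C : ℝ, (∀ k i : ℕ, |(k : ℝ) ^ (3 / 2 : ℝ) * retProb (k + i)
      - 2 * √(2 / Real.pi) * ((1 + (-1) ^ (k + i)) / 2)| ≤ C) ∧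
    ∀ i : ℕ, Tendsto (fun k : ℕ => (k : ℝ) ^ (3 / 2 : ℝ) * retProb (k + i)
      - 2 * √(2 / Real.pi) * ((1 + (-1) ^ (k + i)) / 2)) atTop (𝓝 0) := by
  set c := 2 * √(2 / Real.pi) with hc
  have hc0 : 0 ≤ c := by positivity
  have he : ∀ k : ℕ, |c * ((1 + (-1) ^ k) / 2)| ≤ c := by
    intro k
    rcases neg_one_pow_eq_or ℝ k with h | h <;> rw [h] <;> norm_num [abs_of_nonneg hc0, hc0]
  obtain ⟨M, hM⟩ := (retProb_asymp.abs).bddAbove_range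
  have hM' : ∀ k : ℕ, (k : ℝ) ^ (3 / 2 : ℝ) * retProb k ≤ M + c := by
    intro k
    have h1 := hM ⟨k, rfl⟩
    have h2 := le_abs_self ((k : ℝ) ^ (3 / 2 : ℝ) * retProb k - c * ((1 + (-1) ^ k) / 2))
    have h3 := (abs_le.1 (he k)).2
    simp only at h1
    linarith
  have hnn : ∀ k i : ℕ, 0 ≤ (k : ℝ) ^ (3 / 2 : ℝ) * retProb (k + i) := fun k i =>
    mul_nonneg (by positivity) (retProb_nonneg _)
  refine ⟨M + c + c, fun k i => ?_, fun i => ?_⟩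
  · have h1 : (k : ℝ) ^ (3 / 2 : ℝ) * retProb (k + i) ≤ M + c := by
      refine le_trans ?_ (hM' (k + i))
      have := retProb_nonneg (k + i)
      gcongr
      simp
    refine (abs_sub _ _).trans ?_
    rw [abs_of_nonneg (hnn k i)]
    linarith [he (k + i)]
  · have h1 := retProb_asymp.comp (tendsto_add_atTop_nat i)
    have h2 : Tendsto (fun k : ℕ => (1 - ((k : ℝ) / (k + i)) ^ (3 / 2 : ℝ))
        * (((k + i : ℕ) : ℝ) ^ (3 / 2 : ℝ) * retProb (k + i))) atTop (𝓝 0) := by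
      refine Tendsto.zero_mul_isBoundedUnder_le ?_ ?_
      · simpa using (tendsto_ratio_rpow i (3 / 2)).const_sub 1
      · refine isBoundedUnder_of ⟨M + c, fun k => ?_⟩
        have : 0 ≤ ((k + i : ℕ) : ℝ) ^ (3 / 2 : ℝ) * retProb (k + i) := hnn (k + i) 0
        simp only [Function.comp, Real.norm_eq_abs, abs_of_nonneg this]
        exact hM' _
    have h3 := h1.sub h2
    rw [sub_zero] at h3
    refine h3.congr' ?_
    filter_upwards [eventually_gt_atTop 0] with k hk
    have hk' : (0 : ℝ) < k := by exact_mod_cast hk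
    simp only [Function.comp]
    have : ((k : ℝ) / (k + i)) ^ (3 / 2 : ℝ) * ((k + i : ℕ) : ℝ) ^ (3 / 2 : ℝ)
        = (k : ℝ) ^ (3 / 2 : ℝ) := by
      rw [← Real.mul_rpow (by positivity) (by positivity)]
      congr 1
      push_cast
      field_simp
    rw [← this]
    ring

/-- For `α < 1`, dominated convergence in the series of `endVal_hasSum`. The two parities of `k` see
different halves of the geometric series, hence the term `v (-1) ^ k`. -/
theorem endVal_asymp_lt {α : ℝ} (h0 : 0 < α) (h1 : α < 1) :
    ∃ u v : ℝ, |v| < u ∧ Tendsto (fun k : ℕ => (k : ℝ) ^ (3 / 2 : ℝ) * endVal α k 0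
      - (u + v * (-1) ^ k)) atTop (𝓝 0) := by
  obtain ⟨C, hC, hlim⟩ := retProb_shift
  set c := 2 * √(2 / Real.pi) with hc
  have hc0 : 0 < c := by positivity
  have hβ := halfSum_one_lt h0 h1.ne
  set ρ := (halfSum α)⁻¹ with hρ
  have hρ0 : 0 < ρ := inv_pos.2 (by linarith)
  have hρ1 : ρ < 1 := inv_lt_one_of_one_lt₀ hβ
  set a := α⁻¹ / 2 with ha
  have ha0 : 0 < a := by positivity
  refine ⟨a * c * ρ / 2 * (1 - ρ)⁻¹, a * c * ρ / 2 * (1 + ρ)⁻¹, ?_, ?_⟩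
  · rw [abs_of_pos (by positivity)]
    have h1' : 0 < 1 - ρ := by linarith
    gcongr
    linarith
  have hsum : ∀ k : ℕ, HasSum (fun i : ℕ => a * ρ ^ (i + 1) * ((k : ℝ) ^ (3 / 2 : ℝ) * retProb (k + i)
      - c * ((1 + (-1) ^ (k + i)) / 2))) ((k : ℝ) ^ (3 / 2 : ℝ) * endVal α k 0
      - (a * c * ρ / 2 * (1 - ρ)⁻¹ + a * c * ρ / 2 * (1 + ρ)⁻¹ * (-1) ^ k)) := by
    intro k
    have s1 := (endVal_hasSum h0 h1 k).mul_left ((k : ℝ) ^ (3 / 2 : ℝ))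
    have s2 := (hasSum_geometric_of_lt_one hρ0.le hρ1).mul_left (a * c * ρ / 2)
    have s3 := (hasSum_geometric_of_abs_lt_one (r := -ρ)
      (by rw [abs_neg, abs_of_pos hρ0]; exact hρ1)).mul_left (a * c * ρ / 2 * (-1) ^ k)
    have s4 := s1.sub (s2.add s3)
    convert s4 using 1
    · rfl
    · funext i
      rw [pow_add, neg_pow ρ, pow_succ]
      ring
    · rw [sub_neg_eq_add]
      ring
  simp_rw [fun k => (hsum k).tsum_eq.symm]
  have := tendsto_tsum_of_dominated_convergence (𝓕 := (atTop : Filter ℕ))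
    (f := fun (k i : ℕ) => a * ρ ^ (i + 1) * ((k : ℝ) ^ (3 / 2 : ℝ) * retProb (k + i)
      - c * ((1 + (-1) ^ (k + i)) / 2))) (g := fun _ => 0)
    (bound := fun i => a * ρ ^ (i + 1) * C) ?_ ?_ ?_
  · simpa using this
  · simp_rw [pow_succ]
    exact (((summable_geometric_of_lt_one hρ0.le hρ1).mul_right ρ).mul_left a).mul_right C
  · intro i
    simpa using (hlim i).const_mul (a * ρ ^ (i + 1))
  · refine Eventually.of_forall fun k i => ?_
    rw [norm_mul, Real.norm_eq_abs, Real.norm_eq_abs, abs_of_pos (by positivity)]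
    gcongr
    exact hC k i

/-- The three regimes in a common form: up to `o(1)` the normalised expectation depends only on the
parity of `k`, and it is bounded away from `0`. -/
theorem endVal_asymp {α : ℝ} (h0 : 0 < α) :
    ∃ u v : ℝ, |v| < u ∧ Tendsto (fun k : ℕ => (k : ℝ) ^ decayExp α *
      (endVal α k 0 / halfSum (max α 1) ^ k) - (u + v * (-1) ^ k)) atTop (𝓝 0) := by
  rcases lt_trichotomy α 1 with h | h | h
  · have e : decayExp α = 3 / 2 := by simp [decayExp, h, h.le]; norm_num
    simpa [e, max_eq_right h.le, halfSum_one] using endVal_asymp_lt h0 h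
  · subst h
    refine ⟨√(2 / Real.pi), 0, by simp only [abs_zero]; positivity, ?_⟩
    have e : decayExp 1 = 1 / 2 := by simp [decayExp]
    have := endVal_asymp_one.sub_const (√(2 / Real.pi))
    simp only [e, max_self, halfSum_one, one_pow, div_one, zero_mul, add_zero]
    simpa using this
  · refine ⟨1 - α⁻¹ ^ 2, 0, ?_, ?_⟩
    · have : α⁻¹ ^ 2 < 1 := pow_lt_one₀ (by positivity) (inv_lt_one_of_one_lt₀ h) two_ne_zero
      simp only [abs_zero]; linarith
    · have e : decayExp α = 0 := by simp [decayExp, not_le.2 h, not_lt.2 h.le]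
      have := (endVal_asymp_gt h).sub_const (1 - α⁻¹ ^ 2)
      simp only [e, max_eq_left h.le, Real.rpow_zero, one_mul, zero_mul, add_zero]
      simpa using this

/-! ### Independent steps: concentration and parity -/

/-- Expectation of `F` over `n` independent letters with weights `P`. -/
noncomputable def wexp {ι : Type*} [Fintype ι] (P : ι → ℝ) (n : ℕ) (F : (Fin n → ι) → ℝ) : ℝ :=
  ∑ w : Fin n → ι, (∏ i, P (w i)) * F w

/-- The total `∑ i, X (w i) j` along a word `w`; for `X = moves` it counts the steps that move
coordinate `j`. -/
def visits {ι : Type*} {d n : ℕ} (X : ι → Fin d → ℕ) (w : Fin n → ι) (j : Fin d) : ℕ :=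
  ∑ i, X (w i) j

section Prob

variable {ι : Type*} [Fintype ι] {P : ι → ℝ}

theorem wexp_prod (P : ι → ℝ) (n : ℕ) (φ : ι → ℝ) :
    wexp P n (fun w => ∏ i, φ (w i)) = (∑ s, P s * φ s) ^ n := by
  rw [Fintype.sum_pow]
  simp [wexp, Finset.prod_mul_distrib]

theorem wexp_const (h1 : ∑ s, P s = 1) (n : ℕ) (c : ℝ) : wexp P n (fun _ => c) = c := by
  have := wexp_prod P n (fun _ => 1)
  simp only [Finset.prod_const_one, mul_one, h1, one_pow] at this
  simp only [wexp, mul_one] at this ⊢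
  rw [← Finset.sum_mul, this, one_mul]

theorem wexp_mono (hP : ∀ s, 0 ≤ P s) (n : ℕ) {F G : (Fin n → ι) → ℝ} (h : ∀ w, F w ≤ G w) :
    wexp P n F ≤ wexp P n G :=
  Finset.sum_le_sum fun w _ =>
    mul_le_mul_of_nonneg_left (h w) (Finset.prod_nonneg fun i _ => hP (w i))

theorem wexp_add (n : ℕ) (F G : (Fin n → ι) → ℝ) :
    wexp P n (fun w => F w + G w) = wexp P n F + wexp P n G := by
  simp [wexp, mul_add, Finset.sum_add_distrib]

theorem wexp_sub (n : ℕ) (F G : (Fin n → ι) → ℝ) :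
    wexp P n (fun w => F w - G w) = wexp P n F - wexp P n G := by
  simp [wexp, mul_sub, Finset.sum_sub_distrib]

theorem wexp_sum {κ : Type*} (s : Finset κ) (n : ℕ) (F : κ → (Fin n → ι) → ℝ) :
    wexp P n (fun w => ∑ b ∈ s, F b w) = ∑ b ∈ s, wexp P n (F b) := by
  simp only [wexp, Finset.mul_sum]
  exact Finset.sum_comm

theorem wexp_mul_left (n : ℕ) (c : ℝ) (F : (Fin n → ι) → ℝ) :
    wexp P n (fun w => c * F w) = c * wexp P n F := by
  simp only [wexp, Finset.mul_sum]
  exact Finset.sum_congr rfl fun w _ => by ring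

theorem abs_wexp_le (hP : ∀ s, 0 ≤ P s) (n : ℕ) (F : (Fin n → ι) → ℝ) :
    |wexp P n F| ≤ wexp P n (fun w => |F w|) := by
  unfold wexp
  refine (Finset.abs_sum_le_sum_abs _ _).trans_eq (Finset.sum_congr rfl fun w _ => ?_)
  rw [abs_mul, abs_of_nonneg (Finset.prod_nonneg fun i _ => hP (w i))]

/-- Chernoff bound: a sum of independent variables with negative mean is nonnegative with
exponentially small probability. -/
theorem wexp_chernoff (hP : ∀ s, 0 ≤ P s) (h1 : ∑ s, P s = 1) (φ : ι → ℝ)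
    (hφ : ∑ s, P s * φ s < 0) :
    ∃ ρ : ℝ, 0 ≤ ρ ∧ ρ < 1 ∧ ∀ n : ℕ,
      wexp P n (fun w => if 0 ≤ ∑ i, φ (w i) then 1 else 0) ≤ ρ ^ n := by
  have hd : HasDerivAt (fun t : ℝ => ∑ s, P s * Real.exp (t * φ s)) (∑ s, P s * φ s) 0 := by
    have : ∀ s ∈ Finset.univ, HasDerivAt (fun t : ℝ => P s * Real.exp (t * φ s)) (P s * φ s) 0 := by
      intro s _
      have := (((hasDerivAt_id (0 : ℝ)).mul_const (φ s)).exp).const_mul (P s)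
      simpa using this
    exact HasDerivAt.fun_sum this
  -- the moment generating function equals `1` at `0` with negative derivative, so it dips below `1`
  obtain ⟨t, ht0, ht⟩ : ∃ t : ℝ, 0 < t ∧ ∑ s, P s * Real.exp (t * φ s) < 1 := by
    have h2 := (hasDerivAt_iff_tendsto_slope.1 hd).mono_left
      (nhdsWithin_mono 0 (s := Set.Ioi 0) (fun x (hx : 0 < x) => hx.ne'))
    have h3 := (h2.eventually (gt_mem_nhds hφ)).and self_mem_nhdsWithin
    obtain ⟨t, h4, h5⟩ := h3.exists
    refine ⟨t, h5, ?_⟩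
    have h5' : 0 < t := h5
    simp only [slope_def_field, zero_mul, Real.exp_zero, mul_one, h1, sub_zero] at h4
    rw [div_lt_iff₀ h5'] at h4
    linarith
  refine ⟨_, Finset.sum_nonneg fun s _ => mul_nonneg (hP s) (Real.exp_pos _).le, ht, fun n => ?_⟩
  rw [← wexp_prod]
  refine wexp_mono hP n fun w => ?_
  rw [← Real.exp_sum, ← Finset.mul_sum]
  split_ifs with h
  · exact Real.one_le_exp (mul_nonneg ht0.le h)
  · exact (Real.exp_pos _).le

variable {d : ℕ}

theorem wexp_deviation (hP : ∀ s, 0 ≤ P s) (h1 : ∑ s, P s = 1) (X : ι → Fin d → ℕ) (p : Fin d → ℝ)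
    (hp : ∀ j, p j = ∑ s, P s * X s j) {δ : ℝ} (hδ : 0 < δ) (A : ℕ) :
    Tendsto (fun n : ℕ => (n : ℝ) ^ A *
      wexp P n (fun w => if ∃ j, δ * n ≤ |(visits X w j : ℝ) - p j * n| then 1 else 0))
      atTop (𝓝 0) := by
  have up : ∀ j, ∃ ρ : ℝ, 0 ≤ ρ ∧ ρ < 1 ∧ ∀ n : ℕ, wexp P n (fun w =>
      if 0 ≤ ∑ i, ((X (w i) j : ℝ) - p j - δ) then 1 else 0) ≤ ρ ^ n := fun j =>
    wexp_chernoff hP h1 (fun s => (X s j : ℝ) - p j - δ) (by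
      simp_rw [mul_sub, Finset.sum_sub_distrib, ← Finset.sum_mul, h1, ← hp]
      linarith)
  have dn : ∀ j, ∃ ρ : ℝ, 0 ≤ ρ ∧ ρ < 1 ∧ ∀ n : ℕ, wexp P n (fun w =>
      if 0 ≤ ∑ i, (p j - (X (w i) j : ℝ) - δ) then 1 else 0) ≤ ρ ^ n := fun j =>
    wexp_chernoff hP h1 (fun s => p j - (X s j : ℝ) - δ) (by
      simp_rw [mul_sub, Finset.sum_sub_distrib, ← Finset.sum_mul, h1, ← hp]
      linarith)
  choose a ha0 ha1 ha using up
  choose b hb0 hb1 hb using dn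
  have lim : Tendsto (fun n : ℕ => ∑ j, ((n : ℝ) ^ A * a j ^ n + (n : ℝ) ^ A * b j ^ n)) atTop
      (𝓝 (∑ j : Fin d, (0 + 0))) :=
    tendsto_finsetSum _ fun j _ =>
      (tendsto_pow_const_mul_const_pow_of_abs_lt_one A (by rw [abs_of_nonneg (ha0 j)]; exact ha1 j)).add
      (tendsto_pow_const_mul_const_pow_of_abs_lt_one A (by rw [abs_of_nonneg (hb0 j)]; exact hb1 j))
  rw [add_zero, Finset.sum_const_zero] at lim
  refine squeeze_zero (fun n => ?_) (fun n => ?_) lim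
  · refine mul_nonneg (by positivity) (Finset.sum_nonneg fun w _ => mul_nonneg
      (Finset.prod_nonneg fun i _ => hP (w i)) ?_)
    dsimp only
    split_ifs <;> norm_num
  · simp_rw [← mul_add, ← Finset.mul_sum]
    refine mul_le_mul_of_nonneg_left ?_ (by positivity)
    refine le_trans ?_ (Finset.sum_le_sum fun j _ => add_le_add (ha j n) (hb j n))
    simp_rw [← wexp_add, ← wexp_sum]
    refine wexp_mono hP n fun w => ?_
    have hnn : ∀ j ∈ Finset.univ, (0 : ℝ) ≤ (if 0 ≤ ∑ i, ((X (w i) j : ℝ) - p j - δ) then 1 else 0)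
        + (if 0 ≤ ∑ i, (p j - (X (w i) j : ℝ) - δ) then 1 else 0) := by
      intro j _
      split_ifs <;> norm_num
    split_ifs with h
    · obtain ⟨j, hj⟩ := h
      refine le_trans ?_ (Finset.single_le_sum hnn (Finset.mem_univ j))
      have e1 : ∑ i, ((X (w i) j : ℝ) - p j - δ) = (visits X w j : ℝ) - p j * n - δ * n := by
        simp [visits, Finset.sum_sub_distrib, mul_comm]
      have e2 : ∑ i, (p j - (X (w i) j : ℝ) - δ) = p j * n - (visits X w j : ℝ) - δ * n := by
        simp [visits, Finset.sum_sub_distrib, mul_comm]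
      rw [e1, e2]
      rcases le_abs.1 hj with h | h
      · rw [if_pos (by linarith)]
        split_ifs <;> norm_num
      · rw [if_pos (by linarith : 0 ≤ p j * n - (visits X w j : ℝ) - δ * n)]
        split_ifs <;> norm_num
    · exact Finset.sum_nonneg hnn

/-- The filter of pairs `(n, k)` with `n → ∞` and `k j / n → p j` for every `j`. -/
noncomputable def freqFilter (p : Fin d → ℝ) : Filter (ℕ × (Fin d → ℕ)) :=
  comap (fun q : ℕ × (Fin d → ℕ) => (q.1, fun j => (q.2 j : ℝ) / q.1)) (atTop ×ˢ 𝓝 p)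

/-- A quantity of polynomial growth that tends to `0` when the frequencies tend to their means tends
to `0` in expectation. -/
theorem wexp_tendsto_zero (hP : ∀ s, 0 ≤ P s) (h1 : ∑ s, P s = 1) (X : ι → Fin d → ℕ)
    (p : Fin d → ℝ) (hp : ∀ j, p j = ∑ s, P s * X s j) (D : ℕ → (Fin d → ℕ) → ℝ) (C : ℝ) (A : ℕ)
    (hD : Tendsto (fun q : ℕ × (Fin d → ℕ) => D q.1 q.2) (freqFilter p) (𝓝 0))
    (hC : ∀ n k, 1 ≤ n → |D n k| ≤ C * (n : ℝ) ^ A) :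
    Tendsto (fun n : ℕ => wexp P n (fun w => D n (visits X w))) atTop (𝓝 0) := by
  rw [Metric.tendsto_atTop']
  intro ε hε
  have h2 := hD.eventually (Metric.ball_mem_nhds 0 (half_pos hε))
  rw [freqFilter, eventually_comap, eventually_prod_iff] at h2
  obtain ⟨pa, hpa, pb, hpb, h3⟩ := h2
  obtain ⟨δ, hδ, hball⟩ := Metric.eventually_nhds_iff.1 hpb
  have hdev := (wexp_deviation hP h1 X p hp hδ A).const_mul C
  rw [mul_zero] at hdev
  have h4 := (hdev.eventually (gt_mem_nhds (half_pos hε))).and (hpa.and (eventually_ge_atTop 1))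
  obtain ⟨N, hN⟩ := eventually_atTop.1 h4
  refine ⟨N, fun n hn => ?_⟩
  obtain ⟨h5, h6, h7⟩ := hN n hn.le
  have hn0 : (0 : ℝ) < n := by exact_mod_cast h7
  rw [Real.dist_eq, sub_zero]
  refine (abs_wexp_le hP n _).trans_lt ?_
  have h8 : ∀ w : Fin n → ι, |D n (visits X w)| ≤ ε / 2 + C * (n : ℝ) ^ A *
      (if ∃ j, δ * n ≤ |(visits X w j : ℝ) - p j * n| then 1 else 0) := by
    intro w
    split_ifs with h
    · linarith [hC n (visits X w) h7]
    · push Not at h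
      have h9 : pb (fun j => (visits X w j : ℝ) / n) := by
        apply hball
        rw [dist_pi_lt_iff hδ]
        intro j
        rw [Real.dist_eq, show (visits X w j : ℝ) / n - p j = ((visits X w j : ℝ) - p j * n) / n by
          field_simp, abs_div, abs_of_pos hn0, div_lt_iff₀ hn0]
        exact h j
      have h10 := h3 h6 h9 (n, visits X w) rfl
      rw [Real.dist_eq, sub_zero] at h10
      simp only at h10
      linarith
  refine (wexp_mono hP n h8).trans_lt ?_
  rw [wexp_add, wexp_const h1, wexp_mul_left]
  linarith

theorem tendsto_prod_sub_prod {τ κ : Type*} {l : Filter τ} (s : Finset κ) (Y L : κ → τ → ℝ)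
    (hL : ∀ j, ∃ M, ∀ t, |L j t| ≤ M) (h : ∀ j, Tendsto (fun t => Y j t - L j t) l (𝓝 0)) :
    Tendsto (fun t => ∏ j ∈ s, Y j t - ∏ j ∈ s, L j t) l (𝓝 0) := by
  choose M hM using hL
  have hb : ∀ j, IsBoundedUnder (· ≤ ·) l (norm ∘ L j) := fun j => isBoundedUnder_of ⟨M j, hM j⟩
  have hb' : ∀ s : Finset κ, IsBoundedUnder (· ≤ ·) l (norm ∘ fun t => ∏ j ∈ s, L j t) := fun s =>
    isBoundedUnder_of ⟨∏ j ∈ s, M j, fun t => by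
      simp only [Function.comp, Real.norm_eq_abs, Finset.abs_prod]
      exact Finset.prod_le_prod (fun _ _ => abs_nonneg _) fun j _ => hM j t⟩
  induction s using Finset.induction_on with
  | empty => simpa using tendsto_const_nhds
  | insert a s ha ih =>
    have e1 := (h a).mul ih
    have e2 := (h a).zero_mul_isBoundedUnder_le (hb' s)
    have e3 := ih.zero_mul_isBoundedUnder_le (hb a)
    have e4 := (e1.add e2).add e3
    simp only [mul_zero, add_zero] at e4
    refine e4.congr fun t => ?_
    rw [Finset.prod_insert ha, Finset.prod_insert ha]
    ring

/-- When `k j / n → p j`, an asymptotic expansion in `k j` becomes one in `n`, at the price of a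
factor `p j ^ (-a)`. -/
theorem freq_scaling (p : Fin d → ℝ) (j : Fin d) (hp : 0 < p j) (a u v : ℝ) (g : ℕ → ℝ)
    (hg : Tendsto (fun k : ℕ => (k : ℝ) ^ a * g k - (u + v * (-1) ^ k)) atTop (𝓝 0)) :
    Tendsto (fun q : ℕ × (Fin d → ℕ) => (q.1 : ℝ) ^ a * g (q.2 j)
      - p j ^ (-a) * (u + v * (-1) ^ (q.2 j))) (freqFilter p) (𝓝 0) := by
  have hc : Tendsto (fun q : ℕ × (Fin d → ℕ) => (q.1, fun j => (q.2 j : ℝ) / q.1)) (freqFilter p)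
    (atTop ×ˢ 𝓝 p) := tendsto_comap
  have hn : Tendsto (fun q : ℕ × (Fin d → ℕ) => q.1) (freqFilter p) atTop := by
    have := tendsto_fst.comp hc
    exact this
  have hf : Tendsto (fun q : ℕ × (Fin d → ℕ) => (q.2 j : ℝ) / q.1) (freqFilter p) (𝓝 (p j)) := by
    have := ((continuous_apply j).tendsto p).comp (tendsto_snd.comp hc)
    exact this
  have hnr : Tendsto (fun q : ℕ × (Fin d → ℕ) => (q.1 : ℝ)) (freqFilter p) atTop :=
    tendsto_natCast_atTop_atTop.comp hn
  have hk : Tendsto (fun q : ℕ × (Fin d → ℕ) => q.2 j) (freqFilter p) atTop := by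
    rw [← tendsto_natCast_atTop_iff (R := ℝ)]
    refine (hnr.atTop_mul_pos hp hf).congr' ?_
    filter_upwards [hn.eventually_gt_atTop 0] with q hq
    have : (0 : ℝ) < q.1 := by exact_mod_cast hq
    field_simp
  have hs := hf.rpow_const (p := -a) (Or.inl hp.ne')
  have t1 := hs.mul (hg.comp hk)
  have t2 : Tendsto (fun q : ℕ × (Fin d → ℕ) => (((q.2 j : ℝ) / q.1) ^ (-a) - p j ^ (-a))
      * (u + v * (-1) ^ (q.2 j))) (freqFilter p) (𝓝 0) := by
    refine Tendsto.zero_mul_isBoundedUnder_le (by simpa using hs.sub_const (p j ^ (-a))) ?_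
    refine isBoundedUnder_of ⟨|u| + |v|, fun q => ?_⟩
    refine (abs_add_le _ _).trans ?_
    simp [abs_mul]
  have t3 := t1.add t2
  simp only [mul_zero, add_zero] at t3
  refine t3.congr' ?_
  filter_upwards [hn.eventually_gt_atTop 0, hk.eventually_gt_atTop 0] with q hq hq2
  have h1 : (0 : ℝ) < q.1 := by exact_mod_cast hq
  have h2 : (0 : ℝ) < q.2 j := by exact_mod_cast hq2
  have e : ((q.2 j : ℝ) / q.1) ^ (-a) * (q.2 j : ℝ) ^ a = (q.1 : ℝ) ^ a := by
    rw [Real.rpow_neg (by positivity), Real.div_rpow h2.le h1.le]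
    have : (0 : ℝ) < (q.2 j : ℝ) ^ a := Real.rpow_pos_of_pos h2 a
    have : (0 : ℝ) < (q.1 : ℝ) ^ a := Real.rpow_pos_of_pos h1 a
    field_simp
  simp only [Function.comp]
  rw [← e]
  ring

/-- Expanding the product over subsets `B` of coordinates, the expectation of `∏ (-1) ^ visits` over
the complement of `B` is the `n`-th power of a real number `lam` with `|lam| ≤ 1`. -/
theorem wexp_parity (hP : ∀ s, 0 ≤ P s) (h1 : ∑ s, P s = 1) (X : ι → Fin d → ℕ) (U V : Fin d → ℝ) :
    ∃ l₀ l₁ : ℝ,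
      Tendsto (fun n => wexp P (2 * n) (fun w => ∏ j, (U j + V j * (-1) ^ visits X w j)))
        atTop (𝓝 l₀) ∧
      Tendsto (fun n => wexp P (2 * n + 1) (fun w => ∏ j, (U j + V j * (-1) ^ visits X w j)))
        atTop (𝓝 l₁) := by
  set lam : Finset (Fin d) → ℝ := fun B => ∑ s, P s * ∏ j ∈ B, (-1 : ℝ) ^ X s j with hlam
  have hlam1 : ∀ B, |lam B| ≤ 1 := by
    intro B
    refine (Finset.abs_sum_le_sum_abs _ _).trans ?_
    refine le_trans (Finset.sum_le_sum (g := P) fun s _ => ?_) h1.le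
    rw [abs_mul, abs_of_nonneg (hP s), Finset.abs_prod]
    simp
  have hexp : ∀ n, wexp P n (fun w => ∏ j, (U j + V j * (-1) ^ visits X w j))
      = ∑ B ∈ (Finset.univ : Finset (Fin d)).powerset,
        (∏ j ∈ B, U j) * (∏ j ∈ Finset.univ \ B, V j) * lam (Finset.univ \ B) ^ n := by
    intro n
    simp_rw [Finset.prod_add, wexp_sum, Finset.prod_mul_distrib, ← mul_assoc, wexp_mul_left]
    refine Finset.sum_congr rfl fun B _ => ?_
    rw [hlam, ← wexp_prod]
    congr 1
    congr 1
    funext w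
    simp_rw [visits, ← Finset.prod_pow_eq_pow_sum]
    exact Finset.prod_comm
  have hpow : ∀ B, ∃ l, Tendsto (fun n : ℕ => lam B ^ (2 * n)) atTop (𝓝 l) := by
    intro B
    simp_rw [pow_mul]
    have h2 : lam B ^ 2 ≤ 1 := by
      rw [← sq_abs]
      exact pow_le_one₀ (abs_nonneg _) (hlam1 B)
    rcases h2.lt_or_eq with h | h
    · exact ⟨0, tendsto_pow_atTop_nhds_zero_of_lt_one (sq_nonneg _) h⟩
    · exact ⟨1, by simp [h]⟩
  choose l hl using hpow
  have e₀ := tendsto_finsetSum (Finset.univ : Finset (Fin d)).powerset fun B _ =>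
    (hl (Finset.univ \ B)).const_mul ((∏ j ∈ B, U j) * (∏ j ∈ Finset.univ \ B, V j))
  have e₁ := tendsto_finsetSum (Finset.univ : Finset (Fin d)).powerset fun B _ =>
    ((hl (Finset.univ \ B)).mul_const (lam (Finset.univ \ B))).const_mul
      ((∏ j ∈ B, U j) * (∏ j ∈ Finset.univ \ B, V j))
  refine ⟨_, _, e₀.congr fun n => (hexp _).symm, e₁.congr fun n => ?_⟩
  simp_rw [hexp, pow_succ]

/-- Independent coordinates combined: the rescaled expectation of `∏ j, g j (visits j)` has positive
limits along even and along odd `n`. -/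
theorem wexp_main (hP : ∀ s, 0 ≤ P s) (h1 : ∑ s, P s = 1) (X : ι → Fin d → ℕ)
    (p : Fin d → ℝ) (hp : ∀ j, p j = ∑ s, P s * X s j) (hp0 : ∀ j, 0 < p j)
    (a : Fin d → ℝ) (ha : ∀ j, a j ≤ 2) (g : Fin d → ℕ → ℝ) (hg : ∀ j k, |g j k| ≤ 1)
    (u v : Fin d → ℝ) (huv : ∀ j, |v j| < u j)
    (hlim : ∀ j, Tendsto (fun k : ℕ => (k : ℝ) ^ a j * g j k - (u j + v j * (-1) ^ k))
      atTop (𝓝 0)) :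
    ∃ γ₀ γ₁ : ℝ, 0 < γ₀ ∧ 0 < γ₁ ∧
      Tendsto (fun n : ℕ => wexp P (2 * n) (fun w => ∏ j, g j (visits X w j))
        * ((2 * n : ℕ) : ℝ) ^ (∑ j, a j)) atTop (𝓝 γ₀) ∧
      Tendsto (fun n : ℕ => wexp P (2 * n + 1) (fun w => ∏ j, g j (visits X w j))
        * ((2 * n + 1 : ℕ) : ℝ) ^ (∑ j, a j)) atTop (𝓝 γ₁) := by
  set U : Fin d → ℝ := fun j => p j ^ (-a j) * u j with hU
  set V : Fin d → ℝ := fun j => p j ^ (-a j) * v j with hV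
  have hpa : ∀ j, 0 < p j ^ (-a j) := fun j => Real.rpow_pos_of_pos (hp0 j) _
  have hUV : ∀ j, |V j| < U j := fun j => by
    rw [hU, hV, abs_mul, abs_of_pos (hpa j)]
    exact mul_lt_mul_of_pos_left (huv j) (hpa j)
  have hbd : ∀ j (k : ℕ), |V j * (-1) ^ k| ≤ |V j| := fun j k => by simp [abs_mul]
  have hbd' : ∀ j (k : ℕ), |U j + V j * (-1) ^ k| ≤ |U j| + |V j| := fun j k =>
    (abs_add_le _ _).trans (by linarith [hbd j k])
  have hD : Tendsto (fun n : ℕ => wexp P n (fun w => ∏ j, ((n : ℝ) ^ a j * g j (visits X w j))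
      - ∏ j, (U j + V j * (-1) ^ visits X w j))) atTop (𝓝 0) := by
    refine wexp_tendsto_zero hP h1 X p hp (fun n k => ∏ j, ((n : ℝ) ^ a j * g j (k j))
      - ∏ j, (U j + V j * (-1) ^ k j)) (1 + ∏ j, (|U j| + |V j|)) (2 * d) ?_ ?_
    · refine tendsto_prod_sub_prod Finset.univ
        (fun j (q : ℕ × (Fin d → ℕ)) => (q.1 : ℝ) ^ a j * g j (q.2 j))
        (fun j (q : ℕ × (Fin d → ℕ)) => U j + V j * (-1) ^ q.2 j) (fun j => ⟨_, fun q => hbd' j _⟩)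
        fun j => ?_
      refine (freq_scaling p j (hp0 j) (a j) (u j) (v j) (g j) (hlim j)).congr fun q => ?_
      simp only [hU, hV]
      ring
    · intro n k hn
      have hn1 : (1 : ℝ) ≤ n := by exact_mod_cast hn
      refine (abs_sub _ _).trans ?_
      rw [Finset.abs_prod, Finset.abs_prod, add_mul, one_mul]
      refine add_le_add ?_ ?_
      · have : ∏ j : Fin d, (n : ℝ) ^ 2 = (n : ℝ) ^ (2 * d) := by simp [pow_mul]
        rw [← this]
        refine Finset.prod_le_prod (fun _ _ => abs_nonneg _) fun j _ => ?_
        rw [abs_mul, abs_of_nonneg (by positivity)]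
        refine (mul_le_of_le_one_right (by positivity) (hg j _)).trans ?_
        rw [← Real.rpow_natCast]
        exact Real.rpow_le_rpow_of_exponent_le hn1 (by exact_mod_cast ha j)
      · refine le_trans (Finset.prod_le_prod (fun _ _ => abs_nonneg _) fun j _ => hbd' j _) ?_
        exact le_mul_of_one_le_right (Finset.prod_nonneg fun j _ => by positivity) (one_le_pow₀ hn1)
  obtain ⟨l₀, l₁, hl₀, hl₁⟩ := wexp_parity hP h1 X U V
  have hpos : 0 < ∏ j, (U j - |V j|) := Finset.prod_pos fun j _ => by linarith [hUV j]
  have hlow : ∀ n, ∏ j, (U j - |V j|) ≤ wexp P n (fun w => ∏ j, (U j + V j * (-1) ^ visits X w j)) := by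
    intro n
    rw [← wexp_const h1 n (∏ j, (U j - |V j|))]
    refine wexp_mono hP n fun w => Finset.prod_le_prod (fun j _ => by linarith [hUV j]) fun j _ => ?_
    linarith [(abs_le.1 (hbd j (visits X w j))).1]
  have hcomb : ∀ n, 1 ≤ n → wexp P n (fun w => ∏ j, ((n : ℝ) ^ a j * g j (visits X w j))
      - ∏ j, (U j + V j * (-1) ^ visits X w j))
      + wexp P n (fun w => ∏ j, (U j + V j * (-1) ^ visits X w j))
      = wexp P n (fun w => ∏ j, g j (visits X w j)) * (n : ℝ) ^ (∑ j, a j) := by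
    intro n hn
    have hn0 : (0 : ℝ) < n := by exact_mod_cast hn
    rw [wexp_sub, sub_add_cancel]
    simp_rw [Finset.prod_mul_distrib]
    rw [wexp_mul_left, mul_comm, Real.rpow_sum_of_pos hn0]
  refine ⟨l₀, l₁, hpos.trans_le (ge_of_tendsto' hl₀ fun n => hlow _),
    hpos.trans_le (ge_of_tendsto' hl₁ fun n => hlow _), ?_, ?_⟩
  · have h2 := (hD.comp tendsto_two_mul).add hl₀
    rw [zero_add] at h2
    refine h2.congr' ?_
    filter_upwards [eventually_ge_atTop 1] with n hn
    exact hcomb (2 * n) (by omega)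
  · have h2 := (hD.comp ((tendsto_add_atTop_nat 1).comp tendsto_two_mul)).add hl₁
    rw [zero_add] at h2
    exact h2.congr fun n => hcomb (2 * n + 1) (by omega)

end Prob

/-! ### Decoupling the coordinates -/

theorem sum_flip {d : ℕ} {S : Finset (Fin d → ℤ)} (hrefl : Reflectable d S) (a : Fin d)
    (F : (Fin d → ℤ) → ℝ) :
    ∑ σ ∈ S, F σ = ∑ σ ∈ S, F (Function.update σ a (-(σ a))) := by
  refine Finset.sum_nbij' (fun σ => Function.update σ a (-(σ a)))
    (fun σ => Function.update σ a (-(σ a))) (fun σ h => hrefl σ h a) (fun σ h => hrefl σ h a)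
    ?_ ?_ ?_ <;> intro σ _ <;> simp

theorem sum_symm_coord {d : ℕ} {S : Finset (Fin d → ℤ)} (hrefl : Reflectable d S)
    {ω : (Fin d → ℤ) → ℝ} (hωsymm : ∀ σ ∈ S, ∀ j, ω (Function.update σ j (-(σ j))) = ω σ)
    (t : Fin d → ℤ → ℝ) (a : Fin d) :
    ∑ σ ∈ S, ω σ * ∏ j, t j (σ j)
      = ∑ σ ∈ S, ω σ * ∏ j, (if j = a then (t j (σ j) + t j (-σ j)) / 2 else t j (σ j)) := by
  have h2 : ∑ σ ∈ S, ω σ * ∏ j, t j (σ j)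
      = ∑ σ ∈ S, ω σ * ∏ j, (if j = a then t j (-σ j) else t j (σ j)) := by
    rw [sum_flip hrefl a]
    refine Finset.sum_congr rfl fun σ hσ => ?_
    rw [hωsymm σ hσ a]
    congr 1
    refine Finset.prod_congr rfl fun j _ => ?_
    by_cases h : j = a
    · subst h; simp
    · simp [h]
  have h3 : ∀ σ : Fin d → ℤ, ∏ j, (if j = a then (t j (σ j) + t j (-σ j)) / 2 else t j (σ j))
      = (∏ j, t j (σ j) + ∏ j, (if j = a then t j (-σ j) else t j (σ j))) / 2 := by
    intro σ
    have e : ∀ j ∈ Finset.univ.erase a, (if j = a then t j (-σ j) else t j (σ j)) = t j (σ j) :=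
      fun j hj => if_neg (Finset.ne_of_mem_erase hj)
    have e' : ∀ j ∈ Finset.univ.erase a,
        (if j = a then (t j (σ j) + t j (-σ j)) / 2 else t j (σ j)) = t j (σ j) :=
      fun j hj => if_neg (Finset.ne_of_mem_erase hj)
    rw [← Finset.mul_prod_erase _ _ (Finset.mem_univ a), ← Finset.mul_prod_erase _ (fun j => t j (σ j))
      (Finset.mem_univ a), ← Finset.mul_prod_erase _ (fun j => if j = a then t j (-σ j) else t j (σ j))
      (Finset.mem_univ a), Finset.prod_congr rfl e, Finset.prod_congr rfl e']
    simp only [if_true]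
    ring
  simp_rw [h3, mul_div_assoc', mul_add, add_div, Finset.sum_add_distrib, ← Finset.sum_div]
  rw [← h2]
  ring

/-- By reflection invariance each factor of a product over coordinates may be replaced by its even
part. -/
theorem sum_symm {d : ℕ} {S : Finset (Fin d → ℤ)} (hrefl : Reflectable d S)
    {ω : (Fin d → ℤ) → ℝ} (hωsymm : ∀ σ ∈ S, ∀ j, ω (Function.update σ j (-(σ j))) = ω σ)
    (t : Fin d → ℤ → ℝ) :
    ∑ σ ∈ S, ω σ * ∏ j, t j (σ j)
      = ∑ σ ∈ S, ω σ * ∏ j, ((t j (σ j) + t j (-σ j)) / 2) := by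
  have key : ∀ A : Finset (Fin d), ∑ σ ∈ S, ω σ * ∏ j, t j (σ j)
      = ∑ σ ∈ S, ω σ * ∏ j, (if j ∈ A then (t j (σ j) + t j (-σ j)) / 2 else t j (σ j)) := by
    intro A
    induction A using Finset.induction_on with
    | empty => simp
    | insert a A ha ih =>
      rw [ih, sum_symm_coord hrefl hωsymm
        (fun j y => if j ∈ A then (t j y + t j (-y)) / 2 else t j y) a]
      refine Finset.sum_congr rfl fun σ _ => ?_
      congr 1
      refine Finset.prod_congr rfl fun j _ => ?_
      by_cases h : j = a
      · subst h; simp [ha]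
      · simp [h]
  simpa using key Finset.univ

/-- `1` if the step `s` moves coordinate `j`, and `0` otherwise. -/
def moves {d : ℕ} {S : Finset (Fin d → ℤ)} (s : {σ // σ ∈ S}) (j : Fin d) : ℕ :=
  if s.1 j = 0 then 0 else 1

theorem visits_cons {ι : Type*} {d n : ℕ} (X : ι → Fin d → ℕ) (s : ι) (w : Fin n → ι) (j : Fin d) :
    visits X (Fin.cons s w : Fin (n + 1) → ι) j = visits X w j + X s j := by
  simp [visits, Fin.sum_univ_succ, add_comm]

/-- The walk started at `x` stays in the orthant; the case `k = 0` requires `x` itself to lie in it. -/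
def ConfinedFrom {d n : ℕ} (x : Fin d → ℤ) (w : Fin n → (Fin d → ℤ)) : Prop :=
  ∀ k : ℕ, k ≤ n → ∀ j,
    0 ≤ x j + ∑ i ∈ Finset.univ.filter (fun i : Fin n => (i : ℕ) < k), w i j

theorem confinedFrom_cons {d n : ℕ} {ι : Type*} (f : ι → Fin d → ℤ) (x : Fin d → ℤ) (s : ι)
    (w : Fin n → ι) :
    ConfinedFrom x (fun i => f ((Fin.cons s w : Fin (n + 1) → ι) i)) ↔
      (∀ j, 0 ≤ x j) ∧ ConfinedFrom (x + f s) (fun i => f (w i)) := by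
  have step : ∀ k j, x j + ∑ i ∈ Finset.univ.filter (fun i : Fin (n + 1) => (i : ℕ) < k + 1),
      f ((Fin.cons s w : Fin (n + 1) → ι) i) j
      = (x + f s) j + ∑ i ∈ Finset.univ.filter (fun i : Fin n => (i : ℕ) < k), f (w i) j := by
    intro k j
    simp [Finset.sum_filter, Fin.sum_univ_succ, add_assoc]
  constructor
  · intro h
    refine ⟨fun j => by simpa using h 0 (Nat.zero_le _) j, fun k hk j => ?_⟩
    rw [← step]
    exact h (k + 1) (by omega) j
  · rintro ⟨h0, h⟩ k hk j
    cases k with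
    | zero => simpa using h0 j
    | succ k =>
      rw [step]
      exact h k (by omega) j

/-- The weighted count of orthant-confined walks started at `x`. -/
noncomputable def qcountFrom (d : ℕ) (S : Finset (Fin d → ℤ)) (ω : (Fin d → ℤ) → ℝ)
    (α : Fin d → ℝ) (n : ℕ) (x : Fin d → ℤ) : ℝ :=
  ∑ w : Fin n → {σ // σ ∈ S}, if ConfinedFrom x (fun i => (w i).1) then
    (∏ i, ω (w i).1) * ∏ j, α j ^ (x j + ∑ i, (w i).1 j) else 0

theorem qcountFrom_zero_start (d : ℕ) (S : Finset (Fin d → ℤ)) (ω : (Fin d → ℤ) → ℝ)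
    (α : Fin d → ℝ) (n : ℕ) : qcountW d S ω α n = qcountFrom d S ω α n 0 := by
  simp [qcountW, qcountFrom, Finset.sum_filter, Confined, ConfinedFrom]

/-- Decomposition according to the first step. -/
theorem qcountFrom_succ (d : ℕ) (S : Finset (Fin d → ℤ)) (ω : (Fin d → ℤ) → ℝ)
    (α : Fin d → ℝ) (n : ℕ) (x : Fin d → ℤ) :
    qcountFrom d S ω α (n + 1) x
      = if ∀ j, 0 ≤ x j then ∑ s : {σ // σ ∈ S}, ω s.1 * qcountFrom d S ω α n (x + s.1) else 0 := by
  unfold qcountFrom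
  rw [← (Fin.consEquiv fun _ : Fin (n + 1) => {σ // σ ∈ S}).sum_comp, Fintype.sum_prod_type]
  simp only [Fin.consEquiv, Equiv.coe_fn_mk]
  simp_rw [confinedFrom_cons (fun s : {σ // σ ∈ S} => s.1)]
  by_cases h : ∀ j, 0 ≤ x j
  · rw [if_pos h]
    refine Finset.sum_congr rfl fun s _ => ?_
    rw [Finset.mul_sum]
    refine Finset.sum_congr rfl fun w _ => ?_
    by_cases h2 : ConfinedFrom (x + s.1) (fun i => (w i).1)
    · rw [if_pos ⟨h, h2⟩, if_pos h2]
      simp [Fin.prod_univ_succ, Fin.sum_univ_succ, add_assoc, mul_assoc]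
    · rw [if_neg (fun h3 => h2 h3.2), if_neg h2, mul_zero]
  · simp [h]

/-- The weighted count equals a sum over unconstrained step sequences in which the coordinates enter
only through the number of steps that move them. -/
theorem qcountFrom_eq (d : ℕ) (S : Finset (Fin d → ℤ)) (hstep : IsStepset d S)
    (hrefl : Reflectable d S) (ω : (Fin d → ℤ) → ℝ)
    (hωsymm : ∀ σ ∈ S, ∀ j, ω (Function.update σ j (-(σ j))) = ω σ)
    (α : Fin d → ℝ) (n : ℕ) (x : Fin d → ℤ) :
    qcountFrom d S ω α n x
      = wexp (fun s : {σ // σ ∈ S} => ω s.1) n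
          (fun w => ∏ j, endVal (α j) (visits moves w j) (x j)) := by
  induction n generalizing x with
  | zero =>
    simp only [qcountFrom, wexp, ConfinedFrom, Finset.univ_eq_empty, Finset.prod_empty,
      visits, Finset.sum_empty, endVal_zero, Finset.filter_empty, add_zero, one_mul,
      Finset.univ_unique, Finset.sum_singleton, Finset.prod_ite_zero, Finset.mem_univ, true_imp_iff]
    refine if_congr ⟨fun h => h 0 le_rfl, fun h k _ => h⟩ rfl rfl
  | succ n ih =>
    rw [qcountFrom_succ]
    unfold wexp
    rw [← (Fin.consEquiv fun _ : Fin (n + 1) => {σ // σ ∈ S}).sum_comp, Fintype.sum_prod_type]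
    simp only [Fin.consEquiv, Equiv.coe_fn_mk, visits_cons, Fin.prod_univ_succ, Fin.cons_zero,
      Fin.cons_succ]
    by_cases h : ∀ j, 0 ≤ x j
    · rw [if_pos h]
      simp_rw [ih, wexp, Finset.mul_sum]
      rw [Finset.sum_comm]
      conv_rhs => rw [Finset.sum_comm]
      refine Finset.sum_congr rfl fun w _ => ?_
      have e : ∀ (s : {σ // σ ∈ S}) (F : ℝ), ω s.1 * ((∏ i, ω (w i).1) * F)
          = (∏ i, ω (w i).1) * (ω s.1 * F) := fun s F => by ring
      simp_rw [mul_assoc, e, ← Finset.mul_sum]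
      congr 1
      have hs := sum_symm hrefl hωsymm (fun j y => endVal (α j) (visits moves w j) (x j + y))
      rw [← Finset.sum_coe_sort S, ← Finset.sum_coe_sort S] at hs
      refine hs.trans (Finset.sum_congr rfl fun s _ => ?_)
      congr 1
      refine Finset.prod_congr rfl fun j _ => ?_
      rcases hstep s.1 s.2 j with h1 | h1 | h1
      · simp [moves, h1, endVal_succ _ _ _ (h j), sub_eq_add_neg]
        ring
      · simp [moves, h1]
      · simp [moves, h1, endVal_succ _ _ _ (h j), sub_eq_add_neg]
    · rw [if_neg h]
      push Not at h
      obtain ⟨j, hj⟩ := h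
      symm
      refine Finset.sum_eq_zero fun s _ => Finset.sum_eq_zero fun w _ => ?_
      rw [Finset.prod_eq_zero (Finset.mem_univ j) (endVal_neg _ _ _ hj), mul_zero]

/-- The inventory after symmetrisation: every moving coordinate contributes `halfSum (x j)`. -/
theorem inventoryW_eq {d : ℕ} {S : Finset (Fin d → ℤ)} (hstep : IsStepset d S)
    (hrefl : Reflectable d S) {ω : (Fin d → ℤ) → ℝ}
    (hωsymm : ∀ σ ∈ S, ∀ j, ω (Function.update σ j (-(σ j))) = ω σ) (x : Fin d → ℝ) :
    inventoryW d S ω x = ∑ s : {σ // σ ∈ S}, ω s.1 * ∏ j, halfSum (x j) ^ moves s j := by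
  unfold inventoryW
  rw [sum_symm hrefl hωsymm (fun j y => x j ^ y), ← Finset.sum_coe_sort S]
  refine Finset.sum_congr rfl fun s _ => ?_
  congr 1
  refine Finset.prod_congr rfl fun j _ => ?_
  rcases hstep s.1 s.2 j with h1 | h1 | h1 <;> simp [moves, h1, halfSum, add_comm]

/-! ### Conclusion -/

/-- Asymptotics of weighted reflectable walks with a symmetric (possibly
non-central) step weighting `ω` composed with a central weighting `α`. -/
theorem noncentral_weighted_asymptotics
    (d : ℕ) (hd : 1 ≤ d) (S : Finset (Fin d → ℤ))
    (hstep : IsStepset d S) (hrefl : Reflectable d S) (hnt : NontrivialStepset d S)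
    (ω : (Fin d → ℤ) → ℝ) (hω : ∀ σ ∈ S, 0 < ω σ)
    (hωsymm : ∀ σ ∈ S, ∀ j, ω (Function.update σ j (-(σ j))) = ω σ)
    (α : Fin d → ℝ) (hα : ∀ j, 0 < α j)
    (αplus : Fin d → ℝ) (hαplus : ∀ j, αplus j = max (α j) 1)
    (m r : ℕ)
    (hm : m = (Finset.univ.filter (fun j : Fin d => α j < 1)).card)
    (hr : r = (Finset.univ.filter (fun j : Fin d => α j ≤ 1)).card) :
    ∃ γ₀ γ₁ : ℝ, 0 < γ₀ ∧ 0 < γ₁ ∧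
      Filter.Tendsto
        (fun n : ℕ => qcountW d S ω α (2 * n) * (inventoryW d S ω αplus) ^ (-(2 * n : ℤ))
            * ((2 * n : ℕ) : ℝ) ^ ((r : ℝ) / 2 + (m : ℝ)))
        Filter.atTop (nhds γ₀) ∧
      Filter.Tendsto
        (fun n : ℕ => qcountW d S ω α (2 * n + 1)
            * (inventoryW d S ω αplus) ^ (-((2 * n + 1 : ℕ) : ℤ))
            * ((2 * n + 1 : ℕ) : ℝ) ^ ((r : ℝ) / 2 + (m : ℝ)))
        Filter.atTop (nhds γ₁) := by
  have hS0 : S.Nonempty := by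
    obtain ⟨σ, hσ, _⟩ := hnt ⟨0, hd⟩
    exact ⟨σ, hσ⟩
  set I := inventoryW d S ω αplus with hI
  have hβ : ∀ j, 0 < halfSum (αplus j) := fun j => by
    have : 0 < αplus j := by rw [hαplus]; positivity
    linarith [halfSum_one_le this]
  have hIeq := inventoryW_eq hstep hrefl hωsymm αplus
  rw [← hI] at hIeq
  have hterm : ∀ s : {σ // σ ∈ S}, 0 < ω s.1 * ∏ j, halfSum (αplus j) ^ moves s j := fun s =>
    mul_pos (hω s.1 s.2) (Finset.prod_pos fun j _ => pow_pos (hβ j) _)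
  have hIpos : 0 < I := by
    rw [hIeq]
    have : Nonempty {σ // σ ∈ S} := hS0.to_subtype
    exact Finset.sum_pos (fun s _ => hterm s) Finset.univ_nonempty
  -- the step law under which `q(n) / S_ω(α⁺) ^ n` is an expectation of a product over coordinates
  set P : {σ // σ ∈ S} → ℝ := fun s => ω s.1 * (∏ j, halfSum (αplus j) ^ moves s j) / I with hPdef
  have hP : ∀ s, 0 < P s := fun s => div_pos (hterm s) hIpos
  have hP1 : ∑ s, P s = 1 := by
    rw [hPdef, ← Finset.sum_div, ← hIeq, div_self hIpos.ne']
  have hq : ∀ n, qcountW d S ω α n * (I ^ n)⁻¹ = wexp P n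
      (fun w => ∏ j, (endVal (α j) (visits moves w j) 0 / halfSum (max (α j) 1) ^ visits moves w j)) := by
    intro n
    rw [qcountFrom_zero_start, qcountFrom_eq d S hstep hrefl ω hωsymm α n 0]
    unfold wexp
    rw [Finset.sum_mul]
    refine Finset.sum_congr rfl fun w _ => ?_
    have hw : ∏ i, ∏ j, halfSum (αplus j) ^ moves (w i) j
        = ∏ j, halfSum (αplus j) ^ visits moves w j := by
      rw [Finset.prod_comm]
      exact Finset.prod_congr rfl fun j _ => Finset.prod_pow_eq_pow_sum _ _ _
    have hne : ∏ j, halfSum (αplus j) ^ visits moves w j ≠ 0 :=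
      (Finset.prod_pos fun j _ => pow_pos (hβ j) _).ne'
    simp only [hPdef, Finset.prod_div_distrib, Finset.prod_mul_distrib, ← hαplus, hw,
      Finset.prod_const, Finset.card_univ, Fintype.card_fin, Pi.zero_apply]
    field_simp
  have hsum : ∑ j, decayExp (α j) = (r : ℝ) / 2 + m := by
    simp only [decayExp, Finset.sum_add_distrib, ← Finset.sum_filter, Finset.sum_const,
      nsmul_eq_mul, hm, hr]
    ring
  choose u v huv hlim using fun j => endVal_asymp (hα j)
  obtain ⟨γ₀, γ₁, h0, h1, ht0, ht1⟩ := wexp_main (fun s => (hP s).le) hP1 moves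
    (fun j => ∑ s, P s * moves s j) (fun _ => rfl) (fun j => by
      obtain ⟨σ, hσ, hne⟩ := hnt j
      refine Finset.sum_pos' (fun s _ => mul_nonneg (hP s).le (Nat.cast_nonneg _))
        ⟨⟨σ, hσ⟩, Finset.mem_univ _, ?_⟩
      simpa [moves, hne] using hP ⟨σ, hσ⟩)
    (fun j => decayExp (α j)) (fun j => by unfold decayExp; split_ifs <;> norm_num)
    (fun j k => endVal (α j) k 0 / halfSum (max (α j) 1) ^ k) (fun j k => by
      have hb : 0 < halfSum (max (α j) 1) ^ k := by rw [← hαplus]; exact pow_pos (hβ j) k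
      rw [abs_of_nonneg (div_nonneg (endVal_nonneg (hα j) k 0) hb.le), div_le_one hb]
      exact endVal_bound (hα j) k) u v huv hlim
  rw [hsum] at ht0 ht1
  refine ⟨γ₀, γ₁, h0, h1, ht0.congr fun n => ?_, ht1.congr fun n => ?_⟩
  · rw [← hq, zpow_neg, show (2 * n : ℤ) = ((2 * n : ℕ) : ℤ) by push_cast; rfl, zpow_natCast]
  · rw [← hq, zpow_neg, zpow_natCast]
end
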